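/- arXiv:2411.02978 — 3 statements merged into one kernel-verified Lean document; each statement's English description precedes it below -/
import Mathlib

section
/- For every nonnegative integer n, b'₅(2n+1) is odd if and only if there exists an integer k such that n = 15k² − 5k; otherwise b'₅(2n+1) is even. -/
/-- `b5' n` is the number of partitions of `n` into distinct parts,
none of which is divisible by `5` (with `b5' 0 = 1`). -/
def b5' (n : ℕ) : ℕ :=
  ((Nat.Partition.distincts n).filter (fun p => ∀ i ∈ p.parts, ¬ (5 ∣ i))).card

open PowerSeries PowerSeries.WithPiTopology Finset

local notation "P" => pentagonalSeries (ZMod 2)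

noncomputable section

lemma inv_parity {α : Type*} [DecidableEq α] (S : Finset α) (g : α → α) (hg : ∀ a ∈ S, g a ∈ S)
    (hgg : ∀ a ∈ S, g (g a) = a) :
    (S.card : ZMod 2) = ((S.filter fun a => g a = a).card : ZMod 2) := by
  rw [← Finset.card_filter_add_card_filter_not (s := S) (fun a => g a = a)]
  push_cast
  rw [add_eq_left]
  have : ∑ a ∈ S.filter (fun a => ¬ g a = a), (1 : ZMod 2) = 0 := by
    refine Finset.sum_involution (fun a _ => g a) (fun _ _ => by decide) ?_ ?_ ?_
    · intro a ha _
      exact (mem_filter.1 ha).2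
    · intro a ha
      have ha := mem_filter.1 ha
      exact mem_filter.2 ⟨hg a ha.1, fun h => ha.2 (by rw [hgg a ha.1] at h; exact h.symm)⟩
    · intro a ha
      exact hgg a (mem_filter.1 ha).1
  simpa using this

/-- box solutions for `x^2+5y^2` -/
def S5 (N : ℤ) : Finset (ℤ × ℤ) :=
  (Icc (-N) N ×ˢ Icc (-N) N).filter fun p =>
    0 < p.1 ∧ p.1 % 2 = 1 ∧ p.2 % 2 = 1 ∧ (p.1 - p.2) % 3 = 0 ∧ p.1 ^ 2 + 5 * p.2 ^ 2 = N

lemma mem_S5 (N x y : ℤ) : (x, y) ∈ S5 N ↔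
    0 < x ∧ x % 2 = 1 ∧ y % 2 = 1 ∧ (x - y) % 3 = 0 ∧ x ^ 2 + 5 * y ^ 2 = N := by
  simp only [S5, mem_filter, mem_product, mem_Icc, and_iff_right_iff_imp]
  rintro ⟨-, -, -, -, rfl⟩
  refine ⟨⟨?_, ?_⟩, ?_, ?_⟩ <;> nlinarith [sq_nonneg x, sq_nonneg y, sq_nonneg (x-1), sq_nonneg (y-1), sq_nonneg (x+1), sq_nonneg (y+1)]

/-- the involution -/
def g5 (p : ℤ × ℤ) : ℤ × ℤ :=
  if 0 < 2 * p.1 - 5 * p.2 then ((2 * p.1 - 5 * p.2) / 3, -((p.1 + 2 * p.2) / 3))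
  else (-((2 * p.1 - 5 * p.2) / 3), (p.1 + 2 * p.2) / 3)

lemma g5_mem (N : ℤ) (p : ℤ × ℤ) (hp : p ∈ S5 N) : g5 p ∈ S5 N := by
  obtain ⟨x, y⟩ := p
  rw [mem_S5] at hp
  obtain ⟨h0, h1, h2, h3, h4⟩ := hp
  have e1 : 3 * ((2 * x - 5 * y) / 3) = 2 * x - 5 * y := by omega
  have e2 : 3 * ((x + 2 * y) / 3) = x + 2 * y := by omega
  simp only [g5]
  generalize (2 * x - 5 * y) / 3 = u at *
  generalize (x + 2 * y) / 3 = v at *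
  have e3 : u ^ 2 + 5 * v ^ 2 = N := by
    have : 9 * (u ^ 2 + 5 * v ^ 2) = 9 * N := by
      linear_combination 9 * h4 + (3 * u + 2 * x - 5 * y) * e1 + 5 * (3 * v + x + 2 * y) * e2
    omega
  split_ifs with h
  · rw [mem_S5]
    refine ⟨by omega, by omega, by omega, by omega, by linear_combination e3⟩
  · rw [mem_S5]
    refine ⟨by omega, by omega, by omega, by omega, by linear_combination e3⟩

lemma g5_g5 (N : ℤ) (p : ℤ × ℤ) (hp : p ∈ S5 N) : g5 (g5 p) = p := by
  obtain ⟨x, y⟩ := p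
  rw [mem_S5] at hp
  obtain ⟨h0, h1, h2, h3, h4⟩ := hp
  simp only [g5]
  split_ifs <;> ext <;> simp only <;> omega

open Classical in
lemma S5_card (m : ℕ) : ((S5 (24 * (2 * m + 1) + 6)).card : ZMod 2) =
    if ∃ y : ℤ, 8 * (m : ℤ) + 5 = 5 * y ^ 2 then 1 else 0 := by
  rw [inv_parity _ g5 (g5_mem _) (g5_g5 _)]
  have key : ∀ x y : ℤ, (x, y) ∈ (S5 (24 * (2 * m + 1) + 6)).filter (fun a => g5 a = a) ↔
      (0 < x ∧ x = - 5 * y ∧ 8 * (m : ℤ) + 5 = 5 * y ^ 2) := by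
    intro x y
    rw [mem_filter, mem_S5]
    constructor
    · rintro ⟨⟨h0, h1, h2, h3, h4⟩, h5⟩
      simp only [g5] at h5
      have hh : x = -5 * y ∨ x = y := by
        split_ifs at h5 <;> rw [Prod.mk.injEq] at h5 <;> omega
      rcases hh with rfl | rfl
      · exact ⟨h0, rfl, by linarith⟩
      · exfalso
        have h6 : x ^ 2 = 8 * m + 5 := by linarith
        obtain ⟨k, rfl⟩ : ∃ k, x = 2 * k + 1 := ⟨x / 2, by omega⟩
        have h7 : k * (k + 1) = 2 * m + 1 := by linarith
        have := Int.even_mul_succ_self k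
        rw [h7] at this
        exact absurd this (by simp)
    · rintro ⟨h0, h1, h2⟩
      have hy : y % 2 = 1 := by
        by_contra h
        obtain ⟨k, rfl⟩ : ∃ k, y = 2 * k := ⟨y / 2, by omega⟩
        ring_nf at h2
        omega
      subst h1
      refine ⟨⟨h0, by omega, hy, by omega, by linarith⟩, ?_⟩
      simp only [g5]
      rw [if_pos (by omega)]
      ext <;> simp only <;> omega
  split_ifs with h
  · obtain ⟨y, hy⟩ := h
    have hy0 : y ≠ 0 := by rintro rfl; simp at hy; omega
    suffices h : (S5 (24 * (2 * m + 1) + 6)).filter (fun a => g5 a = a) = {(5 * |y|, -|y|)} by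
      rw [h]; simp
    ext ⟨a, b⟩
    rw [key, mem_singleton, Prod.mk.injEq]
    have hpos := abs_pos.2 hy0
    constructor
    · rintro ⟨h1, h2, h3⟩
      have : b ^ 2 = y ^ 2 := by linarith
      have := sq_eq_sq_iff_abs_eq_abs _ _ |>.1 this
      rw [abs_of_neg (show b < 0 by omega)] at this
      omega
    · rintro ⟨rfl, rfl⟩
      refine ⟨by omega, by ring, ?_⟩
      rw [neg_sq, sq_abs]; exact hy
  · suffices h : (S5 (24 * (2 * m + 1) + 6)).filter (fun a => g5 a = a) = ∅ by
      rw [h]; simp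
    ext ⟨a, b⟩
    rw [key]
    simp only [notMem_empty, iff_false]
    rintro ⟨-, -, h3⟩
    exact h ⟨b, h3⟩

lemma S5_not3 (N : ℤ) : ((S5 N).card : ZMod 2) = ((S5 N).filter (fun p => p.1 % 3 ≠ 0)).card := by
  rw [← Finset.card_filter_add_card_filter_not (s := S5 N) (fun p => p.1 % 3 ≠ 0)]
  push_cast
  rw [add_eq_left]
  rw [inv_parity _ (fun p => (p.1, -p.2))]
  · rw [Finset.filter_filter, Finset.filter_eq_empty_iff.2]
    · simp
    · rintro ⟨x, y⟩ h1 ⟨h2, h3⟩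
      rw [mem_S5] at h1
      rw [Prod.mk.injEq] at h3
      omega
  · rintro ⟨x, y⟩ h
    rw [mem_filter, mem_S5] at *
    simp only [ne_eq, not_not] at *
    refine ⟨⟨by omega, by omega, by omega, by omega, by linarith⟩, by omega⟩
  · rintro ⟨x, y⟩ h
    simp

lemma sq_mod24 (x : ℤ) (h2 : x % 2 = 1) (h3 : x % 3 ≠ 0) : ∃ k : ℕ, 24 * (k : ℤ) + 1 = x ^ 2 := by
  have h : (24 : ℤ) ∣ x ^ 2 - 1 := by
    have h0 := Int.emod_add_mul_ediv x 12
    have h1 := Int.emod_nonneg x (show (12 : ℤ) ≠ 0 by norm_num)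
    have h2' := Int.emod_lt_of_pos x (show (0 : ℤ) < 12 by norm_num)
    generalize x % 12 = r at *
    generalize x / 12 = q at *
    have h5 : r = 1 ∨ r = 5 ∨ r = 7 ∨ r = 11 := by omega
    subst h0
    rcases h5 with rfl | rfl | rfl | rfl
    · exact ⟨q + 6 * q ^ 2, by ring⟩
    · exact ⟨1 + 5 * q + 6 * q ^ 2, by ring⟩
    · exact ⟨2 + 7 * q + 6 * q ^ 2, by ring⟩
    · exact ⟨5 + 11 * q + 6 * q ^ 2, by ring⟩
  obtain ⟨k, hk⟩ := h
  have : 0 ≤ k := by nlinarith [sq_nonneg x]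
  lift k to ℕ using this
  exact ⟨k, by linarith⟩

lemma mod_of_sq24 (x : ℤ) (a : ℕ) (h : 24 * (a : ℤ) + 1 = x ^ 2) : x % 2 = 1 ∧ x % 3 ≠ 0 := by
  constructor
  · by_contra h'
    obtain ⟨k, rfl⟩ : ∃ k, x = 2 * k := ⟨x / 2, by omega⟩
    ring_nf at h
    omega
  · intro h'
    obtain ⟨k, rfl⟩ : ∃ k, x = 3 * k := ⟨x / 3, by omega⟩
    ring_nf at h
    omega

open Classical in
lemma S5_bij (n : ℕ) : ((S5 (24 * n + 6)).filter (fun p => p.1 % 3 ≠ 0)).card =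
    ((antidiagonal n).filter (fun p => (∃ x : ℤ, 24 * (p.1 : ℤ) + 1 = x ^ 2) ∧
      (5 ∣ p.2 ∧ ∃ y : ℤ, 24 * ((p.2 / 5 : ℕ) : ℤ) + 1 = y ^ 2))).card := by
  refine Finset.card_bij (fun p _ => (((p.1 ^ 2 - 1) / 24).toNat, 5 * ((p.2 ^ 2 - 1) / 24).toNat)) ?_ ?_ ?_
  · rintro ⟨x, y⟩ h
    rw [mem_filter, mem_S5] at h
    obtain ⟨⟨h0, h1, h2, h3, h4⟩, h5⟩ := h
    simp only at h5
    obtain ⟨a, ha⟩ := sq_mod24 x h1 h5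
    obtain ⟨b, hb⟩ := sq_mod24 y h2 (by omega)
    have ea : ((x ^ 2 - 1) / 24).toNat = a := by omega
    have eb : ((y ^ 2 - 1) / 24).toNat = b := by omega
    simp only [ea, eb, mem_filter, HasAntidiagonal.mem_antidiagonal]
    refine ⟨by omega, ⟨x, ha⟩, by simp, y, ?_⟩
    rw [Nat.mul_div_cancel_left _ (by norm_num)]
    exact hb
  · rintro ⟨x, y⟩ h ⟨x', y'⟩ h' hh
    rw [mem_filter, mem_S5] at h h'
    obtain ⟨⟨h0, h1, h2, h3, h4⟩, h5⟩ := h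
    obtain ⟨⟨h0', h1', h2', h3', h4'⟩, h5'⟩ := h'
    simp only at h5 h5'
    obtain ⟨a, ha⟩ := sq_mod24 x h1 h5
    obtain ⟨a', ha'⟩ := sq_mod24 x' h1' h5'
    rw [Prod.mk.injEq] at hh
    simp only at hh
    have e1 : x ^ 2 = x' ^ 2 := by omega
    have e2 : y ^ 2 = y' ^ 2 := by omega
    have e3 : x = x' := by nlinarith
    rcases sq_eq_sq_iff_eq_or_eq_neg.1 e2 with e4 | e4
    · rw [e3, e4]
    · omega
  · rintro ⟨a, b⟩ h
    rw [mem_filter, HasAntidiagonal.mem_antidiagonal] at h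
    simp only at h
    obtain ⟨h0, ⟨x, hx⟩, ⟨b, rfl⟩, y, hy⟩ := h
    rw [Nat.mul_div_cancel_left _ (by norm_num)] at hy
    have hx' := mod_of_sq24 x a hx
    have hy' := mod_of_sq24 y b hy
    have fin : ∀ x' y' : ℤ, x' ^ 2 = x ^ 2 → y' ^ 2 = y ^ 2 → 0 < x' → x' % 2 = 1 → y' % 2 = 1 →
        (x' - y') % 3 = 0 → x' % 3 ≠ 0 → ∃ p, ∃ (_ : p ∈ (S5 (24 * n + 6)).filter (fun p => p.1 % 3 ≠ 0)),
          (((p.1 ^ 2 - 1) / 24).toNat, 5 * ((p.2 ^ 2 - 1) / 24).toNat) = (a, 5 * b) := by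
      intro x' y' e1 e2 e3 e4 e5 e6 e7
      refine ⟨(x', y'), ?_, ?_⟩
      · rw [mem_filter, mem_S5]
        exact ⟨⟨e3, e4, e5, e6, by rw [e1, e2]; omega⟩, e7⟩
      · simp only [e1, e2]
        rw [Prod.mk.injEq]
        omega
    have hs : ∃ x' : ℤ, (x' = x ∨ x' = -x) ∧ 0 < x' := by
      rcases lt_trichotomy x 0 with h | h | h
      · exact ⟨-x, by simp, by omega⟩
      · omega
      · exact ⟨x, by simp, h⟩
    obtain ⟨x', hx1, hx2⟩ := hs
    have hx3 : x' ^ 2 = x ^ 2 := by rcases hx1 with h | h <;> rw [h]; ring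
    have hx4 : x' % 3 = 1 ∨ x' % 3 = 2 := by omega
    have hy4 : y % 3 = 1 ∨ y % 3 = 2 := by omega
    by_cases h : (x' - y) % 3 = 0
    · exact fin x' y hx3 rfl hx2 (by omega) hy'.1 h (by omega)
    · have h6 : (x' - -y) % 3 = 0 := by
        rcases hx4 with h4 | h4 <;> rcases hy4 with h5 | h5 <;> omega
      exact fin x' (-y) hx3 (by ring) hx2 (by omega) (by omega) h6 (by omega)

/-- box solutions for `x^2+3y^2` -/
def S3 (N : ℤ) : Finset (ℤ × ℤ) :=
  (Icc (-N) N ×ˢ Icc (-N) N).filter fun p =>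
    0 < p.1 ∧ p.1 % 2 = 1 ∧ (p.1 - p.2) % 4 = 0 ∧ p.1 % 3 ≠ 0 ∧ p.1 ^ 2 + 3 * p.2 ^ 2 = N

lemma mem_S3 (N x y : ℤ) : (x, y) ∈ S3 N ↔
    0 < x ∧ x % 2 = 1 ∧ (x - y) % 4 = 0 ∧ x % 3 ≠ 0 ∧ x ^ 2 + 3 * y ^ 2 = N := by
  simp only [S3, mem_filter, mem_product, mem_Icc, and_iff_right_iff_imp]
  rintro ⟨-, -, -, -, rfl⟩
  refine ⟨⟨?_, ?_⟩, ?_, ?_⟩ <;> nlinarith [sq_nonneg x, sq_nonneg y, sq_nonneg (x-1), sq_nonneg (y-1), sq_nonneg (x+1), sq_nonneg (y+1)]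

/-- the involution -/
def g3 (p : ℤ × ℤ) : ℤ × ℤ :=
  if 0 < 3 * p.2 - p.1 then ((3 * p.2 - p.1) / 2, (p.1 + p.2) / 2)
  else (-((3 * p.2 - p.1) / 2), -((p.1 + p.2) / 2))

lemma g3_mem (N : ℤ) (p : ℤ × ℤ) (hp : p ∈ S3 N) : g3 p ∈ S3 N := by
  obtain ⟨x, y⟩ := p
  rw [mem_S3] at hp
  obtain ⟨h0, h1, h2, h3, h4⟩ := hp
  have e1 : 2 * ((3 * y - x) / 2) = 3 * y - x := by omega
  have e2 : 2 * ((x + y) / 2) = x + y := by omega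
  simp only [g3]
  generalize (3 * y - x) / 2 = u at *
  generalize (x + y) / 2 = v at *
  have e3 : u ^ 2 + 3 * v ^ 2 = N := by
    have : 4 * (u ^ 2 + 3 * v ^ 2) = 4 * N := by
      linear_combination 4 * h4 + (2 * u + 3 * y - x) * e1 + 3 * (2 * v + x + y) * e2
    omega
  split_ifs with h
  · rw [mem_S3]
    refine ⟨by omega, by omega, by omega, by omega, by linear_combination e3⟩
  · rw [mem_S3]
    refine ⟨by omega, by omega, by omega, by omega, by linear_combination e3⟩

lemma g3_g3 (N : ℤ) (p : ℤ × ℤ) (hp : p ∈ S3 N) : g3 (g3 p) = p := by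
  obtain ⟨x, y⟩ := p
  rw [mem_S3] at hp
  obtain ⟨h0, h1, h2, h3, h4⟩ := hp
  simp only [g3]
  split_ifs <;> ext <;> simp only <;> omega

open Classical in
lemma S3_card (n : ℕ) : ((S3 (24 * n + 4)).card : ZMod 2) =
    if ∃ x : ℤ, 6 * (n : ℤ) + 1 = x ^ 2 ∧ x % 2 = 1 then 1 else 0 := by
  rw [inv_parity _ g3 (g3_mem _) (g3_g3 _)]
  have key : ∀ x y : ℤ, (x, y) ∈ (S3 (24 * n + 4)).filter (fun a => g3 a = a) ↔
      (0 < x ∧ x = y ∧ 6 * (n : ℤ) + 1 = x ^ 2 ∧ x % 2 = 1) := by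
    intro x y
    rw [mem_filter, mem_S3]
    constructor
    · rintro ⟨⟨h0, h1, h2, h3, h4⟩, h5⟩
      simp only [g3] at h5
      have hh : x = y := by
        split_ifs at h5 <;> rw [Prod.mk.injEq] at h5 <;> omega
      subst hh
      exact ⟨h0, rfl, by linarith, h1⟩
    · rintro ⟨h0, rfl, h2, h1⟩
      have h3 : x % 3 ≠ 0 := by
        intro h
        obtain ⟨k, rfl⟩ : ∃ k, x = 3 * k := ⟨x / 3, by omega⟩
        ring_nf at h2
        omega
      refine ⟨⟨h0, h1, by omega, h3, by linarith⟩, ?_⟩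
      simp only [g3]
      rw [if_pos (by omega)]
      ext <;> simp only <;> omega
  split_ifs with h
  · obtain ⟨y, hy, hy1⟩ := h
    have hy0 : y ≠ 0 := by rintro rfl; simp at hy1
    suffices h : (S3 (24 * n + 4)).filter (fun a => g3 a = a) = {(|y|, |y|)} by
      rw [h]; simp
    ext ⟨a, b⟩
    rw [key, mem_singleton, Prod.mk.injEq]
    have hpos := abs_pos.2 hy0
    constructor
    · rintro ⟨h1, h2, h3, -⟩
      have : a ^ 2 = y ^ 2 := by linarith
      have := sq_eq_sq_iff_abs_eq_abs _ _ |>.1 this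
      rw [abs_of_pos h1] at this
      omega
    · rintro ⟨rfl, rfl⟩
      refine ⟨by omega, rfl, ?_, ?_⟩
      · rw [sq_abs]; exact hy
      · rcases abs_choice y with h | h <;> omega
  · suffices h : (S3 (24 * n + 4)).filter (fun a => g3 a = a) = ∅ by
      rw [h]; simp
    ext ⟨a, b⟩
    rw [key]
    simp only [notMem_empty, iff_false]
    rintro ⟨-, -, h3⟩
    exact h ⟨a, h3⟩

lemma sq_mod8 (x : ℤ) (h2 : x % 2 = 1) : ∃ k : ℕ, 8 * (k : ℤ) + 1 = x ^ 2 := by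
  obtain ⟨k, hk⟩ := Int.eight_dvd_sq_sub_one_of_odd (Int.odd_iff.2 h2)
  have : 0 ≤ k := by nlinarith [sq_nonneg x]
  lift k to ℕ using this
  exact ⟨k, by linarith⟩

lemma mod_of_sq8 (x : ℤ) (a : ℕ) (h : 8 * (a : ℤ) + 1 = x ^ 2) : x % 2 = 1 := by
  by_contra h'
  obtain ⟨k, rfl⟩ : ∃ k, x = 2 * k := ⟨x / 2, by omega⟩
  ring_nf at h
  omega

open Classical in
lemma S3_bij (n : ℕ) : (S3 (24 * n + 4)).card =
    ((antidiagonal n).filter (fun p => (∃ y : ℤ, 8 * (p.1 : ℤ) + 1 = y ^ 2) ∧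
      (∃ x : ℤ, 24 * (p.2 : ℤ) + 1 = x ^ 2))).card := by
  refine Finset.card_bij (fun p _ => (((p.2 ^ 2 - 1) / 8).toNat, ((p.1 ^ 2 - 1) / 24).toNat)) ?_ ?_ ?_
  · rintro ⟨x, y⟩ h
    rw [mem_S3] at h
    obtain ⟨h0, h1, h2, h3, h4⟩ := h
    obtain ⟨a, ha⟩ := sq_mod24 x h1 h3
    obtain ⟨b, hb⟩ := sq_mod8 y (by omega)
    have ea : ((x ^ 2 - 1) / 24).toNat = a := by omega
    have eb : ((y ^ 2 - 1) / 8).toNat = b := by omega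
    simp only [ea, eb, mem_filter, HasAntidiagonal.mem_antidiagonal]
    exact ⟨by omega, ⟨y, hb⟩, ⟨x, ha⟩⟩
  · rintro ⟨x, y⟩ h ⟨x', y'⟩ h' hh
    rw [mem_S3] at h h'
    obtain ⟨h0, h1, h2, h3, h4⟩ := h
    obtain ⟨h0', h1', h2', h3', h4'⟩ := h'
    obtain ⟨a, ha⟩ := sq_mod24 x h1 h3
    obtain ⟨a', ha'⟩ := sq_mod24 x' h1' h3'
    rw [Prod.mk.injEq] at hh
    simp only at hh
    have e1 : x ^ 2 = x' ^ 2 := by omega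
    have e2 : y ^ 2 = y' ^ 2 := by omega
    have e3 : x = x' := by nlinarith
    rcases sq_eq_sq_iff_eq_or_eq_neg.1 e2 with e4 | e4
    · rw [e3, e4]
    · omega
  · rintro ⟨b, a⟩ h
    rw [mem_filter, HasAntidiagonal.mem_antidiagonal] at h
    simp only at h
    obtain ⟨h0, ⟨y, hy⟩, ⟨x, hx⟩⟩ := h
    have hx' := mod_of_sq24 x a hx
    have hy' := mod_of_sq8 y b hy
    have fin : ∀ x' y' : ℤ, x' ^ 2 = x ^ 2 → y' ^ 2 = y ^ 2 → 0 < x' → x' % 2 = 1 →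
        (x' - y') % 4 = 0 → x' % 3 ≠ 0 → ∃ p, ∃ (_ : p ∈ S3 (24 * n + 4)),
          (((p.2 ^ 2 - 1) / 8).toNat, ((p.1 ^ 2 - 1) / 24).toNat) = (b, a) := by
      intro x' y' e1 e2 e3 e4 e6 e7
      refine ⟨(x', y'), ?_, ?_⟩
      · rw [mem_S3]
        exact ⟨e3, e4, e6, e7, by rw [e1, e2]; omega⟩
      · simp only [e1, e2]
        rw [Prod.mk.injEq]
        omega
    have hs : ∃ x' : ℤ, (x' = x ∨ x' = -x) ∧ 0 < x' := by
      rcases lt_trichotomy x 0 with h | h | h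
      · exact ⟨-x, by simp, by omega⟩
      · omega
      · exact ⟨x, by simp, h⟩
    obtain ⟨x', hx1, hx2⟩ := hs
    have hx3 : x' ^ 2 = x ^ 2 := by rcases hx1 with h | h <;> rw [h]; ring
    by_cases h : (x' - y) % 4 = 0
    · exact fin x' y hx3 rfl hx2 (by omega) h (by omega)
    · exact fin x' (-y) hx3 (by ring) hx2 (by omega) (by omega) (by omega)


/-- generating function of `b5'` mod 2 -/
def Bser : PowerSeries (ZMod 2) := PowerSeries.mk fun n => (b5' n : ZMod 2)

lemma sub_eq_add' (f g : PowerSeries (ZMod 2)) : f - g = f + g := by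
  ext n
  simp only [map_sub, map_add, CharTwo.sub_eq_add]

lemma hasProd_Bser :
    HasProd (fun i : ℕ => if 5 ∣ i + 1 then (1 : PowerSeries (ZMod 2)) else 1 - X ^ (i + 1)) Bser := by
  convert! Nat.Partition.hasProd_genFun
    (fun i c ↦ if c < 2 ∧ ¬ 5 ∣ i then (1 : ZMod 2) else 0) using 1
  · ext1 i
    rw [tsum_eq_single 0]
    · split_ifs with h1 h2 h3
      · exact absurd h1 h2.2
      · simp
      · simp [sub_eq_add']
      · exact absurd ⟨by norm_num, h1⟩ h3
    · intro b hb
      have : ¬ (b + 1 < 2) := by omega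
      simp [this]
  · simp_rw [Bser, b5', Nat.Partition.genFun, Nat.Partition.distincts, filter_filter, card_filter,
      Finsupp.prod, prod_boole]
    congr 1
    ext n
    push_cast
    refine Finset.sum_congr rfl fun p _ => ?_
    congr 1
    simp only [Multiset.toFinsupp_support, Multiset.mem_toFinset, Multiset.toFinsupp_apply, eq_iff_iff,
      Multiset.nodup_iff_count_le_one]
    constructor
    · rintro ⟨h1, h2⟩ i hi
      exact ⟨by have := h1 i; omega, h2 i hi⟩
    · intro h
      refine ⟨fun i => ?_, fun i hi => (h i hi).2⟩
      by_cases hi : i ∈ p.parts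
      · have := (h i hi).1; omega
      · simp [Multiset.count_eq_zero.2 hi]

lemma continuous_expand5 : Continuous (expand (R := ZMod 2) 5 (by norm_num)) := by
  rw [continuous_iff_continuousAt]
  intro f
  unfold ContinuousAt
  rw [tendsto_iff_coeff_tendsto]
  intro d
  simp_rw [coeff_expand]
  split_ifs
  · exact (continuous_coeff (ZMod 2) _).continuousAt
  · exact tendsto_const_nhds

lemma hasProd_expand5 :
    HasProd (fun i : ℕ => if 5 ∣ i + 1 then (1 : PowerSeries (ZMod 2)) - X ^ (i + 1) else 1)
      (expand 5 (by norm_num) P) := by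
  have h := (hasProd_one_sub_X_pow (ZMod 2)).map (expand (R := ZMod 2) 5 (by norm_num))
    continuous_expand5
  have hinj : Function.Injective (fun i : ℕ => 5 * i + 4) := fun a b h => by
    simp only at h; omega
  rw [← hinj.hasProd_iff]
  · convert h using 1
    ext1 i
    have : 5 ∣ 5 * i + 4 + 1 := ⟨i + 1, by ring⟩
    simp only [Function.comp_apply, this, if_true, map_sub, map_one, map_pow, expand_X, ← pow_mul]
    congr 2
  · intro x hx
    rw [if_neg]
    rintro ⟨k, hk⟩
    exact hx ⟨k - 1, by simp only; omega⟩

lemma Bser_mul : Bser * expand 5 (by norm_num) P = P := by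
  have h := hasProd_Bser.mul hasProd_expand5
  refine h.unique ?_
  convert hasProd_one_sub_X_pow (ZMod 2) using 1
  ext1 i
  split_ifs <;> simp

lemma expand2_eq (f : PowerSeries (ZMod 2)) : expand 2 (by norm_num) f = f ^ 2 := by
  have := MvPowerSeries.map_frobenius_expand (σ := Unit) (R := ZMod 2) 2 (by norm_num) (f := f)
  have h2 : frobenius (ZMod 2) 2 = RingHom.id _ := by
    ext x
    simp
  rw [h2] at this
  rw [MvPowerSeries.map_id] at this
  exact this

/-- odd part -/
def Od (f : PowerSeries (ZMod 2)) : PowerSeries (ZMod 2) := PowerSeries.mk fun n => coeff (2 * n + 1) f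
/-- even part -/
def Ev (f : PowerSeries (ZMod 2)) : PowerSeries (ZMod 2) := PowerSeries.mk fun n => coeff (2 * n) f

lemma dissect (f : PowerSeries (ZMod 2)) :
    f = expand 2 (by norm_num) (Ev f) + X * expand 2 (by norm_num) (Od f) := by
  ext n
  rw [map_add]
  rcases Nat.even_or_odd' n with ⟨k, rfl | rfl⟩
  · rw [coeff_expand_mul]
    rcases k with _ | k
    · simp [Ev]
    · rw [show 2 * (k + 1) = 2 * k + 1 + 1 by ring, coeff_succ_X_mul, coeff_expand_of_not_dvd]
      · simp [Ev]; rfl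
      · omega
  · rw [coeff_succ_X_mul, coeff_expand_mul, coeff_expand_of_not_dvd]
    · simp [Od]
    · omega

lemma Od_eq (e o : PowerSeries (ZMod 2)) :
    Od (expand 2 (by norm_num) e + X * expand 2 (by norm_num) o) = o := by
  ext n
  rw [Od, coeff_mk, map_add, coeff_succ_X_mul, coeff_expand_mul, coeff_expand_of_not_dvd]
  · simp
  · omega

lemma Od_mul (f g : PowerSeries (ZMod 2)) : Od (f * expand 2 (by norm_num) g) = Od f * g := by
  conv_lhs => rw [dissect f]
  rw [add_mul, mul_assoc, ← map_mul, ← map_mul, Od_eq]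

open Classical in
/-- triangular series -/
def Psi : PowerSeries (ZMod 2) := PowerSeries.mk fun n => if ∃ y : ℤ, 8 * (n : ℤ) + 1 = y ^ 2 then 1 else 0

lemma pent_iff (n : ℕ) : n ∈ Set.range pentagonal ↔ ∃ x : ℤ, 24 * (n : ℤ) + 1 = x ^ 2 := by
  constructor
  · rintro ⟨k, rfl⟩
    exact ⟨6 * k - 1, by linear_combination 12 * two_mul_natCast_pentagonal k⟩
  · rintro ⟨x, hx⟩
    have h6 : ∃ k, x = 6 * k - 1 ∨ -x = 6 * k - 1 := by
      have h0 := Int.emod_add_mul_ediv x 6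
      have h1 := Int.emod_nonneg x (show (6 : ℤ) ≠ 0 by norm_num)
      have h2 := Int.emod_lt_of_pos x (show (0 : ℤ) < 6 by norm_num)
      generalize x % 6 = r at *
      generalize x / 6 = q at *
      subst h0
      have : (6 : ℤ) ∣ r ^ 2 - 1 := ⟨4 * n - 2 * r * q - 6 * q ^ 2, by linear_combination -hx⟩
      interval_cases r <;> first | (exfalso; revert this; decide) | skip
      · exact ⟨-q, Or.inr (by ring)⟩
      · exact ⟨q + 1, Or.inl (by ring)⟩
    obtain ⟨k, hk⟩ := h6
    refine ⟨k, ?_⟩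
    have := two_mul_natCast_pentagonal k
    have h3 : x ^ 2 = (6 * k - 1) ^ 2 := by
      rcases hk with h | h
      · rw [h]
      · rw [← h]; ring
    zify
    linear_combination (by
      have : 24 * (pentagonal k : ℤ) = 24 * n := by linear_combination 12 * this - hx - h3
      omega : (pentagonal k : ℤ) = n)

open Classical in
lemma coeff_P (n : ℕ) : coeff n P = if ∃ x : ℤ, 24 * (n : ℤ) + 1 = x ^ 2 then 1 else 0 := by
  split_ifs with h
  · obtain ⟨k, rfl⟩ := (pent_iff n).2 h
    rw [coeff_pentagonalSeries_pentagonal]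
    rcases Int.even_or_odd k with h | h
    · simp [Int.negOnePow_even _ h]
    · simp [Int.negOnePow_odd _ h]
  · exact coeff_pentagonalSeries_eq_zero _ (fun h' => h ((pent_iff n).1 h'))

lemma Psi_mul : Psi * P = expand 4 (by norm_num) P := by
  classical
  ext n
  have h : coeff n (Psi * P) = ((S3 (24 * n + 4)).card : ZMod 2) := by
    rw [S3_bij, coeff_mul, card_filter]
    push_cast
    refine Finset.sum_congr rfl fun p _ => ?_
    rw [coeff_P, Psi, coeff_mk]
    split_ifs <;> simp_all
  rw [h, S3_card, coeff_expand]
  by_cases h4 : 4 ∣ n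
  · obtain ⟨m, rfl⟩ := h4
    rw [if_pos (show 4 ∣ 4 * m by simp), Nat.mul_div_cancel_left _ (by norm_num), coeff_P]
    refine if_congr ⟨?_, ?_⟩ rfl rfl
    · rintro ⟨x, hx, -⟩
      exact ⟨x, by push_cast at hx; linarith⟩
    · rintro ⟨x, hx⟩
      exact ⟨x, by push_cast; linarith, (mod_of_sq24 x m hx).1⟩
  · rw [if_neg h4, if_neg]
    rintro ⟨x, hx, hx2⟩
    obtain ⟨k, hk⟩ := sq_mod8 x hx2
    omega

lemma Od_PP : Od (P * expand 5 (by norm_num) P) = expand 5 (by norm_num) Psi := by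
  classical
  ext m
  have h : coeff (2 * m + 1) (P * expand 5 (by norm_num) P) =
      ((S5 (24 * (2 * m + 1) + 6)).card : ZMod 2) := by
    have hb := S5_bij (2 * m + 1)
    push_cast at hb
    rw [S5_not3, hb, coeff_mul, card_filter]
    push_cast
    refine Finset.sum_congr rfl fun p _ => ?_
    rw [coeff_P, coeff_expand, coeff_P]
    push_cast
    split_ifs <;> simp_all
  rw [Od, coeff_mk, h, S5_card, coeff_expand]
  by_cases h5 : 5 ∣ m
  · obtain ⟨k, rfl⟩ := h5
    rw [if_pos (show 5 ∣ 5 * k by simp), Nat.mul_div_cancel_left _ (by norm_num), Psi, coeff_mk]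
    refine if_congr ⟨?_, ?_⟩ rfl rfl
    · rintro ⟨x, hx⟩
      exact ⟨x, by push_cast at hx; linarith⟩
    · rintro ⟨x, hx⟩
      exact ⟨x, by push_cast; linarith⟩
  · rw [if_neg h5, if_neg]
    rintro ⟨x, hx⟩
    omega

lemma P_ne : P ≠ 0 := by
  intro h
  have h1 := coeff_P 0
  rw [h, if_pos ⟨1, by norm_num⟩] at h1
  simp at h1

lemma Psi_eq : Psi = P ^ 3 := by
  have h := Psi_mul
  rw [show expand 4 (by norm_num) P = P ^ 3 * P by
    rw [show (expand 4 (by norm_num) P) = expand 2 (by norm_num) (expand 2 (by norm_num) P) from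
      expand_mul (R := ZMod 2) 2 (by norm_num) 2 (by norm_num) P, expand2_eq, expand2_eq]
    ring] at h
  exact mul_right_cancel₀ P_ne h

lemma Od_B : Od Bser = expand 10 (by norm_num) P := by
  have hne : expand 5 (by norm_num) P ≠ 0 := by
    intro h
    have := Bser_mul
    rw [h, mul_zero] at this
    exact P_ne this.symm
  have h1 : Bser * expand 2 (by norm_num) (expand 5 (by norm_num) P) = P * expand 5 (by norm_num) P := by
    rw [expand2_eq, sq, ← mul_assoc, Bser_mul]
  have h2 := congrArg Od h1
  rw [Od_mul, Od_PP, Psi_eq, map_pow] at h2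
  rw [show (expand 10 (by norm_num) P) = expand 2 (by norm_num) (expand 5 (by norm_num) P) from
      expand_mul (R := ZMod 2) 2 (by norm_num) 5 (by norm_num) P, expand2_eq]
  exact mul_right_cancel₀ hne (h2.trans (by ring))

end

theorem b5'_odd_iff (n : ℕ) :
    Odd (b5' (2 * n + 1)) ↔ ∃ k : ℤ, (n : ℤ) = 15 * k ^ 2 - 5 * k := by
  have h := congrArg (coeff n) Od_B
  rw [Od, coeff_mk, Bser, coeff_mk, coeff_expand] at h
  rw [← ZMod.natCast_eq_one_iff_odd, h]
  constructor
  · intro h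
    split_ifs at h with h5
    · obtain ⟨m, rfl⟩ := h5
      have h3 : m ∈ Set.range pentagonal := by
        by_contra h'
        rw [Nat.mul_div_cancel_left _ (by norm_num), coeff_pentagonalSeries_eq_zero _ h'] at h
        exact absurd h (by decide)
      obtain ⟨k, rfl⟩ := h3
      exact ⟨k, by push_cast; linear_combination 5 * two_mul_natCast_pentagonal k⟩
    · exact absurd h (by decide)
  · rintro ⟨k, hk⟩
    have : n = 10 * pentagonal k := by
      zify
      linear_combination hk - 5 * two_mul_natCast_pentagonal k
    subst this
    rw [if_pos (by simp), Nat.mul_div_cancel_left _ (by norm_num), coeff_P,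
      if_pos ((pent_iff _).1 ⟨k, rfl⟩)]
end

section
/- For every nonnegative integer n, b'₅(20n+7) ≡ 0 (mod 4). -/
open PowerSeries Filter

namespace B5

/-- Coefficientwise convergence. -/
def Lim (s : ℕ → ℤ⟦X⟧) (F : ℤ⟦X⟧) : Prop :=
  ∀ k, ∀ᶠ N in atTop, coeff k (s N) = coeff k F

theorem Lim.unique {s : ℕ → ℤ⟦X⟧} {F G : ℤ⟦X⟧} (h : Lim s F) (h' : Lim s G) : F = G := by
  ext k
  obtain ⟨N, h1, h2⟩ := ((h k).and (h' k)).exists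
  rw [← h1, h2]

theorem Lim.comp {s : ℕ → ℤ⟦X⟧} {F : ℤ⟦X⟧} (h : Lim s F) {u : ℕ → ℕ}
    (hu : Tendsto u atTop atTop) : Lim (fun N => s (u N)) F :=
  fun k => hu.eventually (h k)

theorem Lim.mul {s t : ℕ → ℤ⟦X⟧} {F G : ℤ⟦X⟧} (h : Lim s F) (h' : Lim t G) :
    Lim (fun N => s N * t N) (F * G) := by
  intro k
  have h1 : ∀ᶠ N in atTop, ∀ p ∈ Finset.HasAntidiagonal.antidiagonal k,
      coeff p.1 (s N) = coeff p.1 F ∧ coeff p.2 (t N) = coeff p.2 G :=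
    (Filter.eventually_all_finset _).2 fun p _ => (h p.1).and (h' p.2)
  filter_upwards [h1] with N hN
  rw [coeff_mul, coeff_mul]
  exact Finset.sum_congr rfl fun p hp => by rw [(hN p hp).1, (hN p hp).2]

theorem Lim.congr {s t : ℕ → ℤ⟦X⟧} {F : ℤ⟦X⟧} (h : Lim s F) (h' : ∀ N, s N = t N) : Lim t F := by
  have : s = t := funext h'
  rwa [← this]

theorem Lim.expand {s : ℕ → ℤ⟦X⟧} {F : ℤ⟦X⟧} (h : Lim s F) (p : ℕ) (hp : p ≠ 0) :
    Lim (fun N => PowerSeries.expand p hp (s N)) (PowerSeries.expand p hp F) := by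
  intro k
  simp only [coeff_expand]
  split_ifs
  · exact h _
  · simp

/-- The infinite product of `1 + X ^ (a + c i)`. -/
noncomputable def pr (a c : ℕ) : ℤ⟦X⟧ :=
  PowerSeries.mk fun k => coeff k (∏ i ∈ Finset.range (k + 1), (1 + X ^ (a + c * i)))

theorem lim_pr {a c : ℕ} (ha : 1 ≤ a) (hc : 1 ≤ c) :
    Lim (fun N => ∏ i ∈ Finset.range N, (1 + X ^ (a + c * i))) (pr a c) := by
  intro k
  filter_upwards [eventually_ge_atTop (k + 1)] with N hN
  rw [pr, coeff_mk]
  induction N, hN using Nat.le_induction with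
  | base => rfl
  | succ N hN ih =>
    rw [Finset.prod_range_succ, mul_add, mul_one, map_add, ih, coeff_mul_X_pow', if_neg, add_zero]
    nlinarith

theorem expand_pr {a c : ℕ} (ha : 1 ≤ a) (hc : 1 ≤ c) (p : ℕ) (hp : p ≠ 0) :
    PowerSeries.expand p hp (pr a c) = pr (p * a) (p * c) := by
  have hp' : 1 ≤ p := Nat.one_le_iff_ne_zero.2 hp
  refine ((lim_pr ha hc).expand p hp).unique
    ((lim_pr (a := p * a) (c := p * c) (Nat.mul_pos hp' ha) (Nat.mul_pos hp' hc)).congr fun N => ?_)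
  rw [map_prod]
  refine Finset.prod_congr rfl fun i _ => ?_
  rw [map_add, map_one, map_pow, expand_X, ← pow_mul]
  ring_nf

theorem prod_range_mul_aux (g : ℕ → ℤ⟦X⟧) (m N : ℕ) :
    ∏ i ∈ Finset.range (m * N), g i =
      ∏ i ∈ Finset.range N, ∏ j ∈ Finset.range m, g (m * i + j) := by
  induction N with
  | zero => simp
  | succ N ih => rw [mul_add, mul_one, Finset.prod_range_add, ih, Finset.prod_range_succ]

theorem tendsto_mul_aux (m : ℕ) (hm : 0 < m) : Tendsto (fun N : ℕ => m * N) atTop atTop :=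
  tendsto_id.const_mul_atTop' hm

theorem pr_split {a c : ℕ} (ha : 1 ≤ a) (hc : 1 ≤ c) :
    pr a c = pr a (2 * c) * pr (a + c) (2 * c) := by
  refine ((lim_pr ha hc).comp (tendsto_mul_aux 2 (by norm_num))).unique
    (((lim_pr (c := 2 * c) ha (by omega)).mul
      (lim_pr (a := a + c) (c := 2 * c) (by omega) (by omega))).congr fun N => ?_)
  rw [prod_range_mul_aux, ← Finset.prod_mul_distrib]
  refine Finset.prod_congr rfl fun i _ => ?_
  simp only [Finset.prod_range_succ, Finset.prod_range_zero, one_mul]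
  ring_nf

theorem pr_five : pr 1 1 = pr 1 5 * pr 2 5 * pr 3 5 * pr 4 5 * pr 5 5 := by
  refine ((lim_pr le_rfl le_rfl).comp (tendsto_mul_aux 5 (by norm_num))).unique
    ((((((lim_pr (a := 1) (c := 5) (by omega) (by omega)).mul
      (lim_pr (a := 2) (c := 5) (by omega) (by omega))).mul
      (lim_pr (a := 3) (c := 5) (by omega) (by omega))).mul
      (lim_pr (a := 4) (c := 5) (by omega) (by omega))).mul
      (lim_pr (a := 5) (c := 5) (by omega) (by omega))).congr fun N => ?_)
  rw [prod_range_mul_aux]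
  simp only [← Finset.prod_mul_distrib]
  refine Finset.prod_congr rfl fun i _ => ?_
  simp only [Finset.prod_range_succ, Finset.prod_range_zero, one_mul]
  ring_nf

/-- Euler's product. -/
noncomputable def f : ℤ⟦X⟧ := pentagonalSeries ℤ

theorem lim_f : Lim (fun N => ∏ i ∈ Finset.range N, (1 - X ^ (i + 1))) f := by
  intro k
  have h := coeff_prod_one_sub_X_pow_eventually_eq ℤ k
  exact h.filter_mono Filter.tendsto_finset_range |>.mono fun N hN => hN

theorem f_mul_pr : f * pr 1 1 = PowerSeries.expand 2 two_ne_zero f := by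
  refine (lim_f.mul (lim_pr le_rfl le_rfl)).unique
    ((lim_f.expand 2 two_ne_zero).congr fun N => ?_)
  rw [map_prod, ← Finset.prod_mul_distrib]
  refine Finset.prod_congr rfl fun i _ => ?_
  rw [map_sub, map_one, map_pow, expand_X, ← pow_mul]
  ring_nf

/-- The generating function. -/
noncomputable def G : ℤ⟦X⟧ := PowerSeries.mk fun n => (b5' n : ℤ)

theorem hasProd_G : letI := PowerSeries.WithPiTopology.instTopologicalSpace ℤ
    HasProd (fun i => if 5 ∣ i + 1 then (1 : ℤ⟦X⟧) else 1 + X ^ (i + 1)) G := by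
  let _ := PowerSeries.WithPiTopology.instTopologicalSpace ℤ
  convert! Nat.Partition.hasProd_genFun
    (fun i c => if ¬ 5 ∣ i ∧ c < 2 then (1 : ℤ) else 0) using 1
  · ext1 i
    split_ifs with h
    · simp [h, PowerSeries.smul_eq_C_mul]
    · rw [tsum_eq_single 0]
      · simp [h, PowerSeries.smul_eq_C_mul]
      · intro j hj
        simp [hj, PowerSeries.smul_eq_C_mul]
  · ext n
    rw [G, coeff_mk, Nat.Partition.coeff_genFun]
    simp only [Finsupp.prod, Finset.prod_boole]
    rw [b5', Nat.Partition.distincts, Finset.filter_filter, Finset.card_filter]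
    push_cast
    refine Finset.sum_congr rfl fun p _ => ?_
    congr 1
    simp only [eq_iff_iff, Multiset.toFinsupp_support, Multiset.mem_toFinset,
      Multiset.toFinsupp_apply, Multiset.nodup_iff_count_le_one]
    constructor
    · rintro ⟨h1, h2⟩ i hi
      exact ⟨h2 i hi, Nat.lt_succ_of_le (h1 i)⟩
    · intro h
      refine ⟨fun i => ?_, fun i hi => (h i hi).1⟩
      by_cases hi : i ∈ p.parts
      · exact Nat.le_of_lt_succ (h i hi).2
      · rw [Multiset.count_eq_zero_of_notMem hi]; exact zero_le_one

theorem lim_G : Lim (fun N => ∏ i ∈ Finset.range N,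
    (if 5 ∣ i + 1 then (1 : ℤ⟦X⟧) else 1 + X ^ (i + 1))) G := by
  let _ := PowerSeries.WithPiTopology.instTopologicalSpace ℤ
  intro k
  have h := hasProd_G.tendsto_prod_nat
  rw [PowerSeries.WithPiTopology.tendsto_iff_coeff_tendsto] at h
  have := h k
  rw [nhds_discrete] at this
  exact this.eventually (p := fun x => x = coeff k G) (Filter.eventually_pure.2 rfl)

theorem G_eq : G = pr 1 5 * pr 2 5 * pr 3 5 * pr 4 5 := by
  refine (lim_G.comp (tendsto_mul_aux 5 (by norm_num))).unique
    (((((lim_pr (a := 1) (c := 5) (by omega) (by omega)).mul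
      (lim_pr (a := 2) (c := 5) (by omega) (by omega))).mul
      (lim_pr (a := 3) (c := 5) (by omega) (by omega))).mul
      (lim_pr (a := 4) (c := 5) (by omega) (by omega))).congr fun N => ?_)
  rw [prod_range_mul_aux]
  simp only [← Finset.prod_mul_distrib]
  refine Finset.prod_congr rfl fun i _ => ?_
  simp only [Finset.prod_range_succ, Finset.prod_range_zero, one_mul]
  rw [if_neg (by omega), if_neg (by omega), if_neg (by omega), if_neg (by omega),
    if_pos (by omega)]
  ring_nf

end B5

open PowerSeries Filter

namespace B5

/-- Gaussian binomial coefficients. -/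
noncomputable def gb (p : ℤ⟦X⟧) : ℕ → ℕ → ℤ⟦X⟧
  | _, 0 => 1
  | 0, _ + 1 => 0
  | M + 1, k + 1 => gb p M k + p ^ (k + 1) * gb p M (k + 1)

theorem gb_zero (p : ℤ⟦X⟧) (M : ℕ) : gb p M 0 = 1 := by cases M <;> rfl

theorem gb_of_lt (p : ℤ⟦X⟧) (M k : ℕ) (h : M < k) : gb p M k = 0 := by
  induction M generalizing k with
  | zero => obtain ⟨k, rfl⟩ : ∃ l, k = l + 1 := ⟨k - 1, by omega⟩; rfl
  | succ M ih =>
    obtain ⟨k, rfl⟩ : ∃ l, k = l + 1 := ⟨k - 1, by omega⟩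
    rw [gb, ih k (by omega), ih (k + 1) (by omega)]; simp

theorem gb_binomial (p x y : ℤ⟦X⟧) (M : ℕ) :
    ∏ i ∈ Finset.range M, (y + x * p ^ i) =
      ∑ k ∈ Finset.range (M + 1), gb p M k * p ^ (k.choose 2) * x ^ k * y ^ (M - k) := by
  induction M generalizing x with
  | zero => simp [gb]
  | succ M ih =>
    rw [Finset.prod_range_succ', Finset.sum_range_succ']
    have h1 : ∏ k ∈ Finset.range M, (y + x * p ^ (k + 1)) =
        ∏ k ∈ Finset.range M, (y + (x * p) * p ^ k) :=
      Finset.prod_congr rfl fun i _ => by ring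
    rw [h1, ih, pow_zero, mul_one, mul_add]
    have h2 : (∑ k ∈ Finset.range (M + 1),
        gb p M k * p ^ (k.choose 2) * (x * p) ^ k * y ^ (M - k)) * y =
        (∑ k ∈ Finset.range (M + 1), p ^ (k + 1) * gb p M (k + 1) * p ^ ((k + 1).choose 2) *
          x ^ (k + 1) * y ^ (M - k)) + y ^ (M + 1) := by
      rw [Finset.sum_range_succ', Finset.sum_range_succ, gb_of_lt p M (M + 1) (by omega),
        add_mul, Finset.sum_mul]
      congr 1
      · simp only [mul_zero, zero_mul, add_zero]
        refine Finset.sum_congr rfl fun k hk => ?_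
        have : M - k = (M - (k + 1)) + 1 := by have := Finset.mem_range.1 hk; omega
        rw [this]; ring
      · simp [gb_zero]; ring
    rw [h2]
    simp only [gb, Nat.add_sub_add_right]
    rw [Finset.sum_mul, add_right_comm, ← Finset.sum_add_distrib]
    congr 1
    · refine Finset.sum_congr rfl fun k _ => ?_
      rw [Nat.choose_succ_succ' k 1, Nat.choose_one_right]
      ring
    · simp

/-- Finite Pochhammer product. -/
noncomputable def poch (p : ℤ⟦X⟧) (n : ℕ) : ℤ⟦X⟧ := ∏ i ∈ Finset.range n, (1 - p ^ (i + 1))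

theorem poch_succ (p : ℤ⟦X⟧) (n : ℕ) : poch p (n + 1) = poch p n * (1 - p ^ (n + 1)) :=
  Finset.prod_range_succ _ _

theorem gb_poch (p : ℤ⟦X⟧) (M : ℕ) : ∀ k l, k + l = M →
    gb p M k * poch p k * poch p l = poch p M := by
  induction M with
  | zero =>
    intro k l h
    obtain ⟨rfl, rfl⟩ : k = 0 ∧ l = 0 := by omega
    simp [gb, poch]
  | succ M ih =>
    intro k l h
    rcases k with _ | k
    · obtain rfl : l = M + 1 := by omega
      simp [gb, poch]
    · have h1 := ih k l (by omega)
      rw [gb, poch_succ, poch_succ]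
      rcases l with _ | l
      · obtain rfl : k = M := by omega
        rw [gb_of_lt p k (k + 1) (by omega)]
        linear_combination (1 - p ^ (k + 1)) * h1
      · have h2 := ih (k + 1) l (by omega)
        rw [poch_succ] at h1 h2 ⊢
        have hM : M = k + l + 1 := by omega
        have e : p ^ (M + 1) = p ^ (k + 1) * p ^ (l + 1) := by rw [hM]; ring
        rw [e]
        linear_combination (1 - p ^ (k + 1)) * h1 + p ^ (k + 1) * (1 - p ^ (l + 1)) * h2

theorem poch_dvd (p : ℤ⟦X⟧) (a b : ℕ) (h : a ≤ b) : p ^ (a + 1) ∣ poch p b - poch p a := by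
  induction b, h using Nat.le_induction with
  | base => simp
  | succ b hb ih =>
    rw [poch_succ, show poch p b * (1 - p ^ (b + 1)) - poch p a =
      (poch p b - poch p a) - p ^ (b + 1) * poch p b by ring]
    exact dvd_sub ih (Dvd.dvd.mul_right (pow_dvd_pow _ (by omega)) _)

theorem poch_unit (c n : ℕ) (hc : 1 ≤ c) : IsUnit (poch (X ^ c) n) := by
  rw [PowerSeries.isUnit_iff_constantCoeff, poch, map_prod]
  rw [Finset.prod_eq_one]
  · exact isUnit_one
  · intro i _
    simp
    omega

theorem gb_cong (c N k l : ℕ) (hc : 1 ≤ c) (hkl : k + l = 2 * N) (m : ℕ) (hk : m ≤ k)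
    (hl : m ≤ l) :
    (X ^ c : ℤ⟦X⟧) ^ (m + 1) ∣ poch (X ^ c) N * gb (X ^ c) (2 * N) k - 1 := by
  set p : ℤ⟦X⟧ := X ^ c
  obtain ⟨A, hA⟩ := poch_dvd p m k hk
  obtain ⟨B, hB⟩ := poch_dvd p m l hl
  obtain ⟨C', hC⟩ := poch_dvd p m (2 * N) (by omega)
  obtain ⟨D, hD⟩ := poch_dvd p m N (by omega)
  have h := gb_poch p (2 * N) k l hkl
  have hu : IsUnit (poch p m) := poch_unit c m hc
  have h1 : p ^ (m + 1) ∣ poch p m * (poch p m * gb p (2 * N) k - 1) := by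
    refine ⟨C' - gb p (2 * N) k * A * poch p l - gb p (2 * N) k * poch p m * B, ?_⟩
    rw [sub_eq_iff_eq_add] at hA hB hC hD
    rw [hA, hC] at h
    rw [hB] at h ⊢
    linear_combination h
  have h2 : p ^ (m + 1) ∣ poch p m * gb p (2 * N) k - 1 := (hu.dvd_mul_left).1 h1
  rw [sub_eq_iff_eq_add] at hD
  rw [hD, show (p ^ (m + 1) * D + poch p m) * gb p (2 * N) k - 1 =
    p ^ (m + 1) * (D * gb p (2 * N) k) + (poch p m * gb p (2 * N) k - 1) by ring]
  exact dvd_add (dvd_mul_right _ _) h2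

/-- Exponents of the theta series. -/
def ex (a b : ℕ) (j : ℤ) : ℕ := ((a * (j * (j + 1)) + b * (j * (j - 1))) / 2).toNat

theorem ex_spec (a b : ℕ) (j : ℤ) : 2 * (ex a b j : ℤ) = a * (j * (j + 1)) + b * (j * (j - 1)) := by
  have h1 : 0 ≤ j * (j + 1) := by
    rcases le_or_gt 0 j with h | h
    · positivity
    · nlinarith
  have h2 : 0 ≤ j * (j - 1) := by
    rcases le_or_gt j 0 with h | h
    · nlinarith
    · nlinarith
  have h3 : (2 : ℤ) ∣ a * (j * (j + 1)) + b * (j * (j - 1)) := by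
    refine dvd_add (Dvd.dvd.mul_left (Int.even_mul_succ_self j).two_dvd _)
      (Dvd.dvd.mul_left (Int.even_mul_pred_self j).two_dvd _)
  have h4 : 0 ≤ (a : ℤ) * (j * (j + 1)) + b * (j * (j - 1)) := by positivity
  rw [ex, Int.toNat_of_nonneg (by omega)]
  exact Int.mul_ediv_cancel' h3

theorem ex_ge (a b : ℕ) (ha : 1 ≤ a) (hb : 1 ≤ b) (j : ℤ) : j.natAbs ≤ ex a b j := by
  have h := ex_spec a b j
  have h1 : 0 ≤ j * (j + 1) := by
    rcases le_or_gt 0 j with h | h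
    · positivity
    · nlinarith
  have h2 : 0 ≤ j * (j - 1) := by
    rcases le_or_gt j 0 with h | h
    · nlinarith
    · nlinarith
  have ha' : (1 : ℤ) ≤ a := by exact_mod_cast ha
  have hb' : (1 : ℤ) ≤ b := by exact_mod_cast hb
  have h3 : 2 * j ^ 2 ≤ 2 * (ex a b j : ℤ) := by nlinarith
  have : (j.natAbs : ℤ) ≤ j ^ 2 := by
    rw [← Int.natAbs_sq]
    have := Nat.le_self_pow (two_ne_zero) j.natAbs
    exact_mod_cast this
  omega

/-- Truncated theta series. -/
noncomputable def tt (a b : ℕ) (M : ℕ) : ℤ⟦X⟧ := ∑ j ∈ Finset.Icc (-M : ℤ) M, X ^ ex a b j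

/-- Theta series. -/
noncomputable def th (a b : ℕ) : ℤ⟦X⟧ := PowerSeries.mk fun k => coeff k (tt a b k)

theorem coeff_tt (a b M k : ℕ) : coeff k (tt a b M) =
    ∑ j ∈ Finset.Icc (-M : ℤ) M, if ex a b j = k then 1 else 0 := by
  rw [tt, map_sum]
  refine Finset.sum_congr rfl fun j _ => ?_
  rw [coeff_X_pow]
  simp [eq_comm]

theorem coeff_th (a b : ℕ) (ha : 1 ≤ a) (hb : 1 ≤ b) (M k : ℕ) (h : k ≤ M) :
    coeff k (th a b) = coeff k (tt a b M) := by
  rw [th, coeff_mk, coeff_tt, coeff_tt]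
  refine Finset.sum_subset (fun j hj => ?_) (fun j hj hj' => ?_)
  · simp only [Finset.mem_Icc] at hj ⊢; omega
  · rw [if_neg]
    intro he
    have := ex_ge a b ha hb j
    simp only [Finset.mem_Icc] at hj hj'
    omega

theorem finite_jtp (a b N : ℕ) (ha : 1 ≤ a) :
    (∏ i ∈ Finset.range N, (1 + X ^ (a + (a + b) * i))) *
    (∏ i ∈ Finset.range N, (1 + X ^ (b + (a + b) * i))) =
    ∑ k ∈ Finset.range (2 * N + 1), gb (X ^ (a + b)) (2 * N) k * X ^ ex a b ((k : ℤ) - N) := by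
  set p : ℤ⟦X⟧ := X ^ (a + b) with hp
  have h := gb_binomial p (X ^ a) (p ^ N) (2 * N)
  have hL : ∏ i ∈ Finset.range (2 * N), (p ^ N + X ^ a * p ^ i) =
      X ^ ((a + b) * (N * N + N.choose 2) + a * N) *
      ((∏ i ∈ Finset.range N, (1 + X ^ (a + (a + b) * i))) *
      (∏ i ∈ Finset.range N, (1 + X ^ (b + (a + b) * i)))) := by
    rw [two_mul, Finset.prod_range_add]
    have e1 : ∏ i ∈ Finset.range N, (p ^ N + X ^ a * p ^ (N + i)) =
        p ^ (N * N) * ∏ i ∈ Finset.range N, (1 + X ^ (a + (a + b) * i)) := by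
      have e0 : p ^ (N * N) = ∏ i ∈ Finset.range N, p ^ N := by
        rw [Finset.prod_const, Finset.card_range, pow_mul]
      rw [e0, ← Finset.prod_mul_distrib]
      refine Finset.prod_congr rfl fun i _ => ?_
      rw [hp]; ring
    have e2 : ∏ i ∈ Finset.range N, (p ^ N + X ^ a * p ^ i) =
        p ^ (N.choose 2) * X ^ (a * N) * ∏ i ∈ Finset.range N, (1 + X ^ (b + (a + b) * i)) := by
      rw [← Finset.prod_range_reflect]
      have e3 : p ^ (N.choose 2) = ∏ i ∈ Finset.range N, p ^ (N - 1 - i) := by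
        rw [Finset.prod_range_reflect (fun i => p ^ i), Finset.prod_pow_eq_pow_sum,
          Finset.sum_range_id, Nat.choose_two_right]
      have e4 : (X : ℤ⟦X⟧) ^ (a * N) = ∏ i ∈ Finset.range N, X ^ a := by
        rw [Finset.prod_const, Finset.card_range, pow_mul]
      rw [e3, e4, ← Finset.prod_mul_distrib, ← Finset.prod_mul_distrib]
      refine Finset.prod_congr rfl fun i hi => ?_
      have hi := Finset.mem_range.1 hi
      have : p ^ N = p ^ (N - 1 - i) * (X ^ a * X ^ (b + (a + b) * i)) := by
        rw [hp, ← pow_mul, ← pow_mul, ← pow_add, ← pow_add]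
        congr 1
        obtain ⟨d, rfl⟩ : ∃ d, N = d + 1 + i := ⟨N - 1 - i, by omega⟩
        rw [show d + 1 + i - 1 - i = d by omega]
        ring
      rw [this]; ring
    rw [e1, e2, hp]
    ring
  rw [hL] at h
  have hX : (X : ℤ⟦X⟧) ^ ((a + b) * (N * N + N.choose 2) + a * N) ≠ 0 := pow_ne_zero _ X_ne_zero
  apply mul_left_cancel₀ hX
  rw [h, Finset.mul_sum]
  refine Finset.sum_congr rfl fun k hk => ?_
  have hk := Finset.mem_range.1 hk
  have hexp : (a + b) * k.choose 2 + a * k + (a + b) * (N * (2 * N - k)) =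
      (a + b) * (N * N + N.choose 2) + a * N + ex a b ((k : ℤ) - N) := by
    have h1 := ex_spec a b ((k : ℤ) - N)
    have c2 : ∀ n : ℕ, 2 * ((n.choose 2 : ℕ) : ℤ) = n * (n - 1) := by
      intro n
      have h : (2 * n.choose 2) = n * (n - 1) := by
        rw [Nat.choose_two_right, Nat.mul_div_cancel' (Nat.even_mul_pred_self n).two_dvd]
      rcases n with _ | n
      · simp
      · rw [Nat.add_sub_cancel] at h
        have : (2 * ((n + 1).choose 2 : ℕ) : ℤ) = (n + 1 : ℕ) * n := by exact_mod_cast h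
        rw [this]; push_cast; ring
    have hc1 := c2 k
    have hc2 := c2 N
    zify [show k ≤ 2 * N by omega]
    apply mul_left_cancel₀ (two_ne_zero (α := ℤ))
    linear_combination (a + b : ℤ) * hc1 - (a + b : ℤ) * hc2 - h1
  calc _ = gb p (2 * N) k * X ^ ((a + b) * k.choose 2 + a * k + (a + b) * (N * (2 * N - k))) := by
        rw [hp]; ring
    _ = _ := by rw [hexp]; ring

theorem poch_X (c N : ℕ) (hc : c ≠ 0) : poch (X ^ c) N =
    PowerSeries.expand c hc (∏ i ∈ Finset.range N, (1 - X ^ (i + 1))) := by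
  rw [poch, map_prod]
  refine Finset.prod_congr rfl fun i _ => ?_
  rw [map_sub, map_one, map_pow, expand_X]

theorem jtp (a b c : ℕ) (ha : 1 ≤ a) (hb : 1 ≤ b) (hc : c ≠ 0) (habc : a + b = c) :
    PowerSeries.expand c hc f * (pr a c * pr b c) = th a b := by
  have h1 := (lim_f.expand c hc).mul ((lim_pr (a := a) (c := c) ha (by omega)).mul
    (lim_pr (a := b) (c := c) hb (by omega)))
  refine h1.unique ?_
  intro n
  filter_upwards [eventually_ge_atTop n] with N hN
  rw [coeff_th a b ha hb N n hN, ← sub_eq_zero, ← map_sub]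
  have key : (X : ℤ⟦X⟧) ^ (N + 1) ∣ PowerSeries.expand c hc
      (∏ i ∈ Finset.range N, (1 - X ^ (i + 1))) *
      ((∏ i ∈ Finset.range N, (1 + X ^ (a + c * i))) * ∏ i ∈ Finset.range N, (1 + X ^ (b + c * i)))
      - tt a b N := by
    subst habc
    have ht : tt a b N = ∑ k ∈ Finset.range (2 * N + 1), X ^ ex a b ((k : ℤ) - N) := by
      rw [tt]
      refine Finset.sum_nbij' (fun j => (j + N).toNat) (fun k => (k : ℤ) - N) ?_ ?_ ?_ ?_ ?_
      · intro j hj; simp only [Finset.mem_Icc, Finset.mem_range] at hj ⊢; omega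
      · intro j hj; simp only [Finset.mem_Icc, Finset.mem_range] at hj ⊢; omega
      · intro j hj; simp only [Finset.mem_Icc] at hj ⊢; omega
      · intro j hj; simp
      · intro j hj
        simp only [Finset.mem_Icc] at hj
        congr 2; omega
    rw [finite_jtp a b N ha, ht, ← poch_X, Finset.mul_sum, ← Finset.sum_sub_distrib]
    refine Finset.dvd_sum fun k hk => ?_
    have hk := Finset.mem_range.1 hk
    obtain ⟨Q, hQ⟩ := gb_cong (a + b) N k (2 * N - k) (by omega) (by omega)
      (min k (2 * N - k)) (min_le_left _ _) (min_le_right _ _)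
    rw [show ∀ u v w : ℤ⟦X⟧, u * (v * w) - w = (u * v - 1) * w by intros; ring, hQ,
      ← pow_mul, show ∀ u v w : ℤ⟦X⟧, u * v * w = u * w * v by intros; ring, ← pow_add]
    refine Dvd.dvd.mul_right (pow_dvd_pow _ ?_) _
    have h2 := ex_ge a b ha hb ((k : ℤ) - N)
    have h3 : min k (2 * N - k) + 1 ≤ (a + b) * (min k (2 * N - k) + 1) :=
      Nat.le_mul_of_pos_left _ (by omega)
    omega
  exact (X_pow_dvd_iff.1 key) n (by omega)

end B5

open PowerSeries Filter

namespace B5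

theorem expand_th (a b c : ℕ) (ha : 1 ≤ a) (hb : 1 ≤ b) (hc : c ≠ 0) :
    PowerSeries.expand c hc (th a b) = th (c * a) (c * b) := by
  have hc' : 1 ≤ c := Nat.one_le_iff_ne_zero.2 hc
  have hex : ∀ j, ex (c * a) (c * b) j = c * ex a b j := by
    intro j
    have h1 := ex_spec a b j
    have h2 := ex_spec (c * a) (c * b) j
    zify
    apply mul_left_cancel₀ (two_ne_zero (α := ℤ))
    push_cast at h2
    linear_combination h2 - c * h1
  ext k
  rw [coeff_expand, coeff_th (c * a) (c * b) (Nat.mul_pos hc' ha) (Nat.mul_pos hc' hb) k k le_rfl,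
    coeff_tt]
  split_ifs with h
  · obtain ⟨d, rfl⟩ := h
    rw [Nat.mul_div_cancel_left _ hc',
      coeff_th a b ha hb (c * d) d (Nat.le_mul_of_pos_left _ hc'), coeff_tt]
    refine Finset.sum_congr rfl fun j _ => ?_
    rw [hex]
    simp [hc]
  · symm
    refine Finset.sum_eq_zero fun j _ => ?_
    rw [if_neg]
    rintro rfl
    exact h ⟨_, hex j⟩

/-- Square box. -/
noncomputable def box (M : ℕ) : Finset (ℤ × ℤ) := Finset.Icc (-M : ℤ) M ×ˢ Finset.Icc (-M : ℤ) M

theorem mem_box (M : ℕ) (w : ℤ × ℤ) : w ∈ box M ↔ w.1.natAbs ≤ M ∧ w.2.natAbs ≤ M := by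
  simp only [box, Finset.mem_product, Finset.mem_Icc]
  omega

theorem coeff_th_mul (a b a' b' N : ℕ) (ha : 1 ≤ a) (hb : 1 ≤ b) (ha' : 1 ≤ a') (hb' : 1 ≤ b') :
    coeff N (th a b * th a' b') =
      (((box N).filter fun w => ex a b w.1 + ex a' b' w.2 = N).card : ℤ) := by
  have h1 : coeff N (th a b * th a' b') = coeff N (tt a b N * tt a' b' N) := by
    rw [coeff_mul, coeff_mul]
    refine Finset.sum_congr rfl fun p hp => ?_
    have := Finset.HasAntidiagonal.mem_antidiagonal.1 hp
    rw [coeff_th a b ha hb N p.1 (by omega), coeff_th a' b' ha' hb' N p.2 (by omega)]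
  rw [h1, tt, tt, Finset.sum_mul_sum, ← Finset.sum_product', map_sum, Finset.card_filter]
  push_cast
  refine Finset.sum_congr rfl fun w _ => ?_
  rw [← pow_add, coeff_X_pow]
  simp [eq_comm]

/-- Lattice points on a circle. -/
noncomputable def circ (N : ℕ) : Finset (ℤ × ℤ) :=
  (box (4 * N + 1)).filter fun w => w.1 ^ 2 + w.2 ^ 2 = 4 * N + 1

theorem natAbs_le_sq (u : ℤ) : (u.natAbs : ℤ) ≤ u ^ 2 := by
  rw [← Int.natAbs_sq]
  exact_mod_cast Nat.le_self_pow (two_ne_zero) u.natAbs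

theorem mem_circ (N : ℕ) (w : ℤ × ℤ) : w ∈ circ N ↔ w.1 ^ 2 + w.2 ^ 2 = 4 * N + 1 := by
  simp only [circ, Finset.mem_filter, mem_box]
  constructor
  · exact fun h => h.2
  · intro h
    have h1 := natAbs_le_sq w.1
    have h2 := natAbs_le_sq w.2
    have h3 := sq_nonneg w.1
    have h4 := sq_nonneg w.2
    refine ⟨⟨?_, ?_⟩, h⟩ <;> omega

theorem count_aux (a b a' b' N : ℕ) (ha : 1 ≤ a) (hb : 1 ≤ b) (ha' : 1 ≤ a') (hb' : 1 ≤ b')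
    (w : ℤ × ℤ) :
    w ∈ ((box N).filter fun w => ex a b w.1 + ex a' b' w.2 = N) ↔
      (a * (w.1 * (w.1 + 1)) + b * (w.1 * (w.1 - 1)) +
       (a' * (w.2 * (w.2 + 1)) + b' * (w.2 * (w.2 - 1))) : ℤ) = 2 * N := by
  rw [← ex_spec, ← ex_spec]
  simp only [Finset.mem_filter, mem_box]
  have h1 := ex_ge a b ha hb w.1
  have h2 := ex_ge a' b' ha' hb' w.2
  omega

theorem cA (N : ℕ) : coeff N (th 1 1 * th 2 6) =
    (((circ N).filter fun w => w.1 % 4 = 3 ∧ w.2 % 2 = 0).card : ℤ) := by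
  rw [coeff_th_mul _ _ _ _ _ (by norm_num) (by norm_num) (by norm_num) (by norm_num)]
  congr 1
  refine Finset.card_nbij' (fun w => (4 * w.2 - 1, 2 * w.1))
    (fun w => (w.2 / 2, (w.1 + 1) / 4)) ?_ ?_ ?_ ?_
  · intro w hw
    have hw := (count_aux _ _ _ _ _ (by norm_num) (by norm_num) (by norm_num) (by norm_num) _).1
      (Finset.mem_coe.1 hw)
    refine Finset.mem_coe.2 (Finset.mem_filter.2 ⟨(mem_circ _ _).2 ?_, ?_⟩)
    · push_cast at hw ⊢; linear_combination 2 * hw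
    · dsimp only; omega
  · rintro ⟨u, v⟩ hw
    obtain ⟨h1, h2, h3⟩ := Finset.mem_filter.1 (Finset.mem_coe.1 hw)
    rw [mem_circ] at h1
    dsimp only at h1 h2 h3
    refine Finset.mem_coe.2 ((count_aux _ _ _ _ _ (by norm_num) (by norm_num) (by norm_num)
      (by norm_num) _).2 ?_)
    obtain ⟨x, rfl⟩ : ∃ x, v = 2 * x := ⟨v / 2, by omega⟩
    obtain ⟨j, rfl⟩ : ∃ j, u = 4 * j - 1 := ⟨(u + 1) / 4, by omega⟩
    dsimp only
    rw [show 2 * x / 2 = x by omega, show (4 * j - 1 + 1) / 4 = j by omega]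
    push_cast
    apply mul_left_cancel₀ (two_ne_zero (α := ℤ))
    linear_combination h1
  · rintro ⟨x, j⟩ _
    simp only [Prod.mk.injEq]
    omega
  · rintro ⟨u, v⟩ hw
    obtain ⟨h1, h2, h3⟩ := Finset.mem_filter.1 (Finset.mem_coe.1 hw)
    simp only [Prod.mk.injEq] at h2 h3 ⊢
    omega

theorem cB (N : ℕ) : coeff N (th 1 4 * th 2 3) =
    (((circ N).filter fun w => (w.2 - 3 * w.1 + 3) % 10 = 0).card : ℤ) := by
  rw [coeff_th_mul _ _ _ _ _ (by norm_num) (by norm_num) (by norm_num) (by norm_num)]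
  congr 1
  refine Finset.card_nbij' (fun w => (-3 * w.1 - w.2 + 1, w.1 - 3 * w.2))
    (fun w => ((3 - 3 * w.1 + w.2) / 10, (1 - w.1 - 3 * w.2) / 10)) ?_ ?_ ?_ ?_
  · intro w hw
    have hw := (count_aux _ _ _ _ _ (by norm_num) (by norm_num) (by norm_num) (by norm_num) _).1
      (Finset.mem_coe.1 hw)
    refine Finset.mem_coe.2 (Finset.mem_filter.2 ⟨(mem_circ _ _).2 ?_, ?_⟩)
    · push_cast at hw ⊢; linear_combination 2 * hw
    · dsimp only; omega
  · rintro ⟨u, v⟩ hw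
    obtain ⟨h1, h2⟩ := Finset.mem_filter.1 (Finset.mem_coe.1 hw)
    rw [mem_circ] at h1
    dsimp only at h1 h2
    refine Finset.mem_coe.2 ((count_aux _ _ _ _ _ (by norm_num) (by norm_num) (by norm_num)
      (by norm_num) _).2 ?_)
    obtain ⟨m, hm⟩ : ∃ m, 3 - 3 * u + v = 10 * m := ⟨(3 - 3 * u + v) / 10, by omega⟩
    obtain ⟨n, hn⟩ : ∃ n, 1 - u - 3 * v = 10 * n := ⟨(1 - u - 3 * v) / 10, by omega⟩
    dsimp only
    rw [hm, hn, show 10 * m / 10 = m by omega, show 10 * n / 10 = n by omega]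
    obtain rfl : u = -3 * m - n + 1 := by omega
    obtain rfl : v = m - 3 * n := by omega
    push_cast
    apply mul_left_cancel₀ (two_ne_zero (α := ℤ))
    linear_combination h1
  · rintro ⟨x, j⟩ _
    simp only [Prod.mk.injEq]
    omega
  · rintro ⟨u, v⟩ hw
    obtain ⟨h1, h2⟩ := Finset.mem_filter.1 (Finset.mem_coe.1 hw)
    simp only [Prod.mk.injEq] at h2 ⊢
    omega

theorem cC (N : ℕ) : coeff N (X * (th 5 5 * th 10 30)) =
    (((circ N).filter fun w => (w.1 - 2 * w.2) % 20 = 15 ∧ w.2 % 2 = 0).card : ℤ) := by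
  rcases N with _ | N
  · rw [coeff_zero_X_mul]
    symm
    rw [Nat.cast_eq_zero, Finset.card_eq_zero, Finset.filter_eq_empty_iff]
    rintro ⟨u, v⟩ hw ⟨h2, h3⟩
    rw [mem_circ] at hw
    dsimp only at hw h2 h3
    have h1 := natAbs_le_sq u
    have h1' := natAbs_le_sq v
    have h4 := sq_nonneg u
    have h5 := sq_nonneg v
    push_cast at hw
    have : u.natAbs ≤ 1 := by omega
    have : v.natAbs ≤ 1 := by omega
    omega
  rw [coeff_succ_X_mul,
    coeff_th_mul _ _ _ _ _ (by norm_num) (by norm_num) (by norm_num) (by norm_num)]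
  congr 1
  refine Finset.card_nbij' (fun w => (4 * w.2 - 1 + 4 * w.1, 2 * w.1 - 8 * w.2 + 2))
    (fun w => ((2 * w.1 + w.2) / 10, (w.1 - 2 * w.2 + 5) / 20)) ?_ ?_ ?_ ?_
  · intro w hw
    have hw := (count_aux _ _ _ _ _ (by norm_num) (by norm_num) (by norm_num) (by norm_num) _).1
      (Finset.mem_coe.1 hw)
    refine Finset.mem_coe.2 (Finset.mem_filter.2 ⟨(mem_circ _ _).2 ?_, ?_⟩)
    · push_cast at hw ⊢; linear_combination 2 * hw
    · dsimp only; omega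
  · rintro ⟨u, v⟩ hw
    obtain ⟨h1, h2, h3⟩ := Finset.mem_filter.1 (Finset.mem_coe.1 hw)
    rw [mem_circ] at h1
    dsimp only at h1 h2 h3
    refine Finset.mem_coe.2 ((count_aux _ _ _ _ _ (by norm_num) (by norm_num) (by norm_num)
      (by norm_num) _).2 ?_)
    obtain ⟨x, hx⟩ : ∃ x, 2 * u + v = 10 * x := ⟨(2 * u + v) / 10, by omega⟩
    obtain ⟨j, hj⟩ : ∃ j, u - 2 * v + 5 = 20 * j := ⟨(u - 2 * v + 5) / 20, by omega⟩
    dsimp only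
    rw [hx, hj, show 10 * x / 10 = x by omega, show 20 * j / 20 = j by omega]
    obtain rfl : u = 4 * j - 1 + 4 * x := by omega
    obtain rfl : v = 2 * x - 8 * j + 2 := by omega
    push_cast at h1 ⊢
    apply mul_left_cancel₀ (two_ne_zero (α := ℤ))
    linear_combination h1
  · rintro ⟨x, j⟩ _
    simp only [Prod.mk.injEq]
    omega
  · rintro ⟨u, v⟩ hw
    obtain ⟨h1, h2, h3⟩ := Finset.mem_filter.1 (Finset.mem_coe.1 hw)
    simp only [Prod.mk.injEq] at h2 h3 ⊢
    omega

/-- Sum over the four rotations. -/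
def orb (A : ℤ → ℤ → Bool) (u v : ℤ) : ℕ :=
  (A u v).toNat + (A (-v) u).toNat + (A (-u) (-v)).toNat + (A v (-u)).toNat

theorem rot (N : ℕ) (A : ℤ → ℤ → Bool) :
    4 * ((circ N).filter fun w => A w.1 w.2 = true).card = ∑ w ∈ circ N, orb A w.1 w.2 := by
  have h0 : ((circ N).filter fun w => A w.1 w.2 = true).card =
      ∑ w ∈ circ N, (A w.1 w.2).toNat := by
    rw [Finset.card_filter]
    refine Finset.sum_congr rfl fun w _ => ?_
    cases A w.1 w.2 <;> rfl
  have h1 : ∀ B : ℤ → ℤ → Bool, ∑ w ∈ circ N, (B (-w.2) w.1).toNat =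
      ∑ w ∈ circ N, (B w.1 w.2).toNat := by
    intro B
    refine Finset.sum_nbij' (fun w => (-w.2, w.1)) (fun w => (w.2, -w.1)) ?_ ?_ ?_ ?_ ?_
    · intro w hw; rw [mem_circ] at hw ⊢; rw [← hw]; ring
    · intro w hw; rw [mem_circ] at hw ⊢; rw [← hw]; ring
    · intro w _; simp
    · intro w _; simp
    · intro w _; simp
  have h2 := h1 A
  have h3 := h1 (fun u v => A (-v) u)
  have h4 := h1 (fun u v => A (-u) (-v))
  simp only [neg_neg] at h3 h4
  simp only [orb, Finset.sum_add_distrib]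
  omega

/-- Residue predicates. -/
def pA (u v : ℤ) : Bool := decide (u % 4 = 3 ∧ v % 2 = 0)
/-- Residue predicates. -/
def pB (u v : ℤ) : Bool := decide ((v - 3 * u + 3) % 10 = 0)
/-- Residue predicates. -/
def pC (u v : ℤ) : Bool := decide ((u - 2 * v) % 20 = 15 ∧ v % 2 = 0)

theorem orb_mod (A : ℤ → ℤ → Bool)
    (hA : ∀ u v u' v' : ℤ, u % 20 = u' % 20 → v % 20 = v' % 20 → A u v = A u' v') (u v : ℤ) :
    orb A u v = orb A (u % 20) (v % 20) := by
  unfold orb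
  rw [hA u v (u % 20) (v % 20) (by omega) (by omega),
    hA (-v) u (-(v % 20)) (u % 20) (by omega) (by omega),
    hA (-u) (-v) (-(u % 20)) (-(v % 20)) (by omega) (by omega),
    hA v (-u) (v % 20) (-(u % 20)) (by omega) (by omega)]

theorem orb_table : ∀ r ∈ Finset.range 20, ∀ s ∈ Finset.range 20, (r + s) % 2 = 1 →
    orb pA (r : ℕ) (s : ℕ) = orb pB (r : ℕ) (s : ℕ) + orb pC (r : ℕ) (s : ℕ) := by
  decide +kernel

theorem orb_eq (u v : ℤ) (h : (u + v) % 2 = 1) : orb pA u v = orb pB u v + orb pC u v := by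
  rw [orb_mod pA, orb_mod pB, orb_mod pC]
  · have h1 := orb_table (u % 20).toNat (Finset.mem_range.2 (by omega)) (v % 20).toNat
      (Finset.mem_range.2 (by omega)) (by omega)
    rwa [Int.toNat_of_nonneg (by omega), Int.toNat_of_nonneg (by omega)] at h1
  · intro u v u' v' h1 h2; simp only [pC, decide_eq_decide]; omega
  · intro u v u' v' h1 h2; simp only [pB, decide_eq_decide]; omega
  · intro u v u' v' h1 h2; simp only [pA, decide_eq_decide]; omega

theorem theta_identity :
    th 1 1 * th 2 6 = th 1 4 * th 2 3 + X * (th 5 5 * th 10 30) := by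
  ext N
  rw [map_add, cA, cB, cC]
  have hA := rot N pA
  have hB := rot N pB
  have hC := rot N pC
  have h : ∑ w ∈ circ N, orb pA w.1 w.2 =
      ∑ w ∈ circ N, orb pB w.1 w.2 + ∑ w ∈ circ N, orb pC w.1 w.2 := by
    rw [← Finset.sum_add_distrib]
    refine Finset.sum_congr rfl fun w hw => orb_eq _ _ ?_
    rw [mem_circ] at hw
    have h1 : (w.1 + w.2) % 2 = (w.1 ^ 2 + w.2 ^ 2) % 2 := by
      have h2 := (Int.even_mul_pred_self w.1).two_dvd
      have h3 := (Int.even_mul_pred_self w.2).two_dvd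
      rw [show w.1 * (w.1 - 1) = w.1 ^ 2 - w.1 by ring] at h2
      rw [show w.2 * (w.2 - 1) = w.2 ^ 2 - w.2 by ring] at h3
      omega
    rw [h1, hw]; omega
  simp only [pA, pB, pC, decide_eq_true_eq] at hA hB hC
  zify at hA hB hC h
  omega

end B5

open PowerSeries Filter

namespace B5

/-- Substitution of `X ^ k` for `X`. -/
noncomputable def ee (k : ℕ) [NeZero k] : ℤ⟦X⟧ →ₐ[ℤ] ℤ⟦X⟧ := PowerSeries.expand k (NeZero.ne k)

theorem ee_ee (a b c : ℕ) [NeZero a] [NeZero b] [NeZero c] (h : a * b = c) (F : ℤ⟦X⟧) :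
    ee a (ee b F) = ee c F := by
  subst h
  exact (expand_mul a (NeZero.ne a) b (NeZero.ne b) F).symm

theorem ee_X (a : ℕ) [NeZero a] : ee a X = X ^ a := expand_X _ _

theorem ee_th (a b k : ℕ) [NeZero k] (ha : 1 ≤ a) (hb : 1 ≤ b) :
    ee k (th a b) = th (k * a) (k * b) := expand_th a b k ha hb _

theorem coeff_ee (k m : ℕ) [NeZero k] (F : ℤ⟦X⟧) :
    coeff m (ee k F) = if k ∣ m then coeff (m / k) F else 0 := coeff_expand ..

theorem two_dvd_of_coeff (F : ℤ⟦X⟧) (h : ∀ k, 2 ∣ coeff k F) : ∃ U, F = 2 * U := by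
  choose u hu using h
  refine ⟨PowerSeries.mk u, ?_⟩
  ext k
  rw [two_mul, map_add, coeff_mk, hu]
  ring

theorem prod_cong (N : ℕ) : ∃ U : ℤ⟦X⟧, ∏ i ∈ Finset.range N, (1 + X ^ (1 + 1 * i)) =
    ∏ i ∈ Finset.range N, (1 - X ^ (i + 1)) + 2 * U := by
  induction N with
  | zero => exact ⟨0, by simp⟩
  | succ N ih =>
    obtain ⟨U, hU⟩ := ih
    rw [Finset.prod_range_succ, Finset.prod_range_succ, hU]
    refine ⟨U * (1 + X ^ (N + 1)) + (∏ i ∈ Finset.range N, (1 - X ^ (i + 1))) * X ^ (N + 1), ?_⟩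
    rw [show 1 + 1 * N = N + 1 by ring]
    ring

theorem pr_cong : ∃ U, pr 1 1 = f + 2 * U := by
  obtain ⟨U, hU⟩ := two_dvd_of_coeff (pr 1 1 - f) (by
    intro k
    obtain ⟨N, h1, h2⟩ := ((lim_pr (a := 1) (c := 1) le_rfl le_rfl k).and (lim_f k)).exists
    obtain ⟨U, hU⟩ := prod_cong N
    rw [map_sub, ← h1, ← h2]
    dsimp only
    rw [hU, map_add, add_sub_cancel_left, two_mul, map_add]
    exact ⟨coeff k U, by ring⟩)
  exact ⟨U, by rw [← hU]; ring⟩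

theorem f_inv : ∃ g, f * g = 1 := by
  have h : IsUnit f := by
    rw [PowerSeries.isUnit_iff_constantCoeff]
    obtain ⟨N, h1, h2⟩ := ((lim_f 0).and (eventually_ge_atTop 0)).exists
    rw [← coeff_zero_eq_constantCoeff_apply, ← h1, coeff_zero_eq_constantCoeff_apply, map_prod]
    simp
  obtain ⟨g, hg⟩ := h.exists_right_inv
  exact ⟨g, hg⟩

theorem f_sq : ∃ U, f ^ 2 = ee 2 f + 2 * U := by
  obtain ⟨U, hU⟩ := pr_cong
  have h : f * pr 1 1 = ee 2 f := f_mul_pr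
  refine ⟨-f * U, ?_⟩
  linear_combination h - f * hU

theorem pr12 : pr 1 1 = pr 1 2 * ee 2 (pr 1 1) := by
  have h : ee 2 (pr 1 1) = pr 2 2 := expand_pr le_rfl le_rfl 2 two_ne_zero
  rw [h]
  exact pr_split le_rfl le_rfl

theorem phi_f : ∃ V, f ^ 2 * th 1 1 = ee 2 f + 4 * V := by
  have h1 : ee 2 f * (pr 1 2 * pr 1 2) = th 1 1 := jtp 1 1 2 le_rfl le_rfl two_ne_zero rfl
  have h2 : f * pr 1 1 = ee 2 f := f_mul_pr
  have h3 := congrArg (ee 2) h2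
  rw [map_mul, ee_ee 2 2 4 rfl] at h3
  have h4 := pr12
  obtain ⟨U, hU⟩ := f_sq
  have h5 := congrArg (ee 2) hU
  obtain ⟨g, hg⟩ := f_inv
  have h6 := congrArg (ee 4) hg
  simp only [map_mul, map_pow, map_add, map_one, map_ofNat, ee_ee 2 2 4 rfl] at h5 h6
  have h7 : f ^ 2 * th 1 1 * (ee 4 f) ^ 2 = (ee 2 f) ^ 5 := by
    rw [← h1, ← h3]
    have : f * (pr 1 2 * ee 2 (pr 1 1)) = ee 2 f := by rw [← h4, h2]
    linear_combination (ee 2 f) ^ 3 * (f * (pr 1 2 * ee 2 (pr 1 1)) + ee 2 f) * this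
  refine ⟨ee 2 f * (ee 2 U * ee 4 f + ee 2 U ^ 2) * (ee 4 g) ^ 2, ?_⟩
  generalize ee 2 f = f2 at *
  generalize ee 4 f = f4 at *
  generalize ee 4 g = g4 at *
  generalize ee 2 U = U2 at *
  linear_combination g4 ^ 2 * h7 + g4 ^ 2 * f2 * (f2 ^ 2 + f4 + 2 * U2) * h5
    + (f2 - f ^ 2 * th 1 1) * (f4 * g4 + 1) * h6

theorem phi_one : ∃ S, th 1 1 = 1 + 2 * S := by
  obtain ⟨V, hV⟩ := phi_f
  obtain ⟨U, hU⟩ := f_sq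
  obtain ⟨g, hg⟩ := f_inv
  refine ⟨g ^ 2 * (2 * V - U), ?_⟩
  linear_combination g ^ 2 * hV - g ^ 2 * hU - (th 1 1 - 1) * (f * g + 1) * hg

theorem psi_f : ∃ P, th 1 3 = f ^ 3 + 2 * P := by
  have h1 : ee 4 f * (pr 1 4 * pr 3 4) = th 1 3 := jtp 1 3 4 le_rfl (by norm_num) four_ne_zero rfl
  have h0 : pr 1 2 = pr 1 4 * pr 3 4 := pr_split le_rfl (by norm_num)
  have h2 : f * pr 1 1 = ee 2 f := f_mul_pr
  have h3 := congrArg (ee 2) h2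
  rw [map_mul, ee_ee 2 2 4 rfl] at h3
  have h4 := pr12
  have h5 : f * th 1 3 = ee 2 f ^ 2 := by
    rw [← h1, ← h0, ← h3]
    linear_combination -(ee 2 f * f) * h4 + ee 2 f * h2
  obtain ⟨U, hU⟩ := f_sq
  obtain ⟨g, hg⟩ := f_inv
  refine ⟨g * (2 * U ^ 2 - 2 * f ^ 2 * U) + g * f ^ 2 * U - g * U * ee 2 f - g * 2 * U ^ 2
    + g * f ^ 2 * U - g * U * ee 2 f - 2 * g * U ^ 2 , ?_⟩
  have h6 : ee 2 f = f ^ 2 - 2 * U := by linear_combination -hU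
  rw [h6] at h5 ⊢
  linear_combination g * h5 + (f ^ 3 - th 1 3) * hg

theorem G_f5 : ee 5 f ^ 2 * G = th 1 4 * th 2 3 := by
  have h1 : ee 5 f * (pr 1 5 * pr 4 5) = th 1 4 := jtp 1 4 5 le_rfl (by norm_num) (by norm_num) rfl
  have h2 : ee 5 f * (pr 2 5 * pr 3 5) = th 2 3 :=
    jtp 2 3 5 (by norm_num) (by norm_num) (by norm_num) rfl
  rw [← h1, ← h2, G_eq]
  ring

theorem G_main : ee 5 f ^ 2 * G =
    th 1 1 * ee 2 (th 1 3) - X * (ee 5 (th 1 1) * ee 10 (th 1 3)) := by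
  rw [G_f5, ee_th _ _ _ (by norm_num) (by norm_num), ee_th _ _ _ (by norm_num) (by norm_num),
    ee_th _ _ _ (by norm_num) (by norm_num)]
  norm_num only
  rw [theta_identity]
  ring

theorem ff5 : ∃ A, f * ee 5 f = ee 2 (th 1 3) + X * ee 10 (th 1 3) + 2 * A := by
  have h1 : ee 5 (pr 1 1) = pr 5 5 := expand_pr le_rfl le_rfl 5 (by norm_num)
  have h2 := pr_five
  rw [← G_eq, ← h1] at h2
  obtain ⟨U, hU⟩ := pr_cong
  have hU5 := congrArg (ee 5) hU
  obtain ⟨S, hS⟩ := phi_one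
  have hS5 := congrArg (ee 5) hS
  simp only [map_mul, map_add, map_one, map_ofNat] at hU5 hS5
  have h3 := G_main
  refine ⟨S * ee 2 (th 1 3) - X * ee 10 (th 1 3) - X * ee 5 S * ee 10 (th 1 3)
    + ee 5 f * G * ee 5 U - ee 5 f * U, ?_⟩
  rw [hS5, hS] at h3
  linear_combination h3 + ee 5 f * h2 - ee 5 f * hU + ee 5 f * G * hU5

theorem coeff_th_card (a b M k : ℕ) (ha : 1 ≤ a) (hb : 1 ≤ b) (h : k ≤ M) :
    coeff k (th a b) = (((Finset.Icc (-M : ℤ) M).filter fun j => ex a b j = k).card : ℤ) := by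
  rw [coeff_th a b ha hb M k h, coeff_tt, Finset.card_filter]
  push_cast
  rfl

theorem mem_th (a b M k : ℕ) (ha : 1 ≤ a) (hb : 1 ≤ b) (h : k ≤ M) (j : ℤ) :
    j ∈ ((Finset.Icc (-M : ℤ) M).filter fun j => ex a b j = k) ↔
      (a * (j * (j + 1)) + b * (j * (j - 1)) : ℤ) = 2 * k := by
  rw [← ex_spec]
  have h1 := ex_ge a b ha hb j
  simp only [Finset.mem_filter, Finset.mem_Icc]
  omega

theorem phi_split : th 1 1 = th 4 4 + 2 * (X * th 8 24) := by
  ext k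
  have h1 := coeff_th_card 1 1 k k le_rfl le_rfl le_rfl
  have h2 := coeff_th_card 4 4 k k (by norm_num) (by norm_num) le_rfl
  have m1 := mem_th 1 1 k k le_rfl le_rfl le_rfl
  have m2 := mem_th 4 4 k k (by norm_num) (by norm_num) le_rfl
  set A := (Finset.Icc (-k : ℤ) k).filter fun j => ex 1 1 j = k with hA
  set B := (Finset.Icc (-k : ℤ) k).filter fun j => ex 4 4 j = k with hB
  clear_value A B
  have e1 : (A.filter fun j => j % 2 = 0).card = B.card := by
    refine Finset.card_nbij' (fun j => j / 2) (fun j => 2 * j) ?_ ?_ ?_ ?_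
    · intro j hj
      obtain ⟨h3, h4⟩ := Finset.mem_filter.1 (Finset.mem_coe.1 hj)
      refine Finset.mem_coe.2 ((m2 _).2 ?_)
      have h3 := (m1 _).1 h3
      obtain ⟨i, rfl⟩ : ∃ i, j = 2 * i := ⟨j / 2, by omega⟩
      dsimp only
      rw [show 2 * i / 2 = i by omega]
      push_cast at h3 ⊢
      linear_combination h3
    · intro j hj
      have h3 := (m2 _).1 (Finset.mem_coe.1 hj)
      refine Finset.mem_coe.2 (Finset.mem_filter.2 ⟨(m1 _).2 ?_, by dsimp only; omega⟩)
      push_cast at h3 ⊢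
      linear_combination h3
    · intro j hj
      obtain ⟨h3, h4⟩ := Finset.mem_filter.1 (Finset.mem_coe.1 hj)
      dsimp only; omega
    · intro j hj
      dsimp only; omega
  have e0 := Finset.card_filter_add_card_filter_not (s := A) (fun j => j % 2 = 0)
  rw [map_add, two_mul, map_add, h1, h2, ← e0, e1]
  rcases k with _ | k
  · rw [coeff_zero_X_mul]
    suffices h : (A.filter fun j => ¬ j % 2 = 0) = ∅ by rw [h]; simp
    rw [Finset.filter_eq_empty_iff]
    intro j hj
    have h3 := (m1 _).1 hj
    push_cast at h3
    have : j ^ 2 = 0 := by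
      apply mul_left_cancel₀ (two_ne_zero (α := ℤ))
      linear_combination h3
    have : j = 0 := by simpa using this
    simp [this]
  · rw [coeff_succ_X_mul, coeff_th_card 8 24 k k (by norm_num) (by norm_num) le_rfl]
    have m3 := mem_th 8 24 k k (by norm_num) (by norm_num) le_rfl
    set C := (Finset.Icc (-k : ℤ) k).filter fun j => ex 8 24 j = k with hC
    have e2 := Finset.card_filter_add_card_filter_not (s := A.filter fun j => ¬ j % 2 = 0)
      (fun j => j % 4 = 3)
    rw [Finset.filter_filter, Finset.filter_filter] at e2
    have e3 : (A.filter fun j => ¬ j % 2 = 0 ∧ j % 4 = 3).card = C.card := by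
      refine Finset.card_nbij' (fun j => (j + 1) / 4) (fun j => 4 * j - 1) ?_ ?_ ?_ ?_
      · intro j hj
        obtain ⟨h3, h4⟩ := Finset.mem_filter.1 (Finset.mem_coe.1 hj)
        refine Finset.mem_coe.2 ((m3 _).2 ?_)
        have h3 := (m1 _).1 h3
        obtain ⟨i, rfl⟩ : ∃ i, j = 4 * i - 1 := ⟨(j + 1) / 4, by omega⟩
        dsimp only
        rw [show (4 * i - 1 + 1) / 4 = i by omega]
        push_cast at h3 ⊢
        linear_combination h3
      · intro j hj
        have h3 := (m3 _).1 (Finset.mem_coe.1 hj)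
        refine Finset.mem_coe.2 (Finset.mem_filter.2 ⟨(m1 _).2 ?_, by dsimp only; omega⟩)
        push_cast at h3 ⊢
        linear_combination h3
      · intro j hj
        obtain ⟨h3, h4⟩ := Finset.mem_filter.1 (Finset.mem_coe.1 hj)
        dsimp only; omega
      · intro j hj
        dsimp only; omega
    have e4 : (A.filter fun j => ¬ j % 2 = 0 ∧ ¬ j % 4 = 3).card = C.card := by
      refine Finset.card_nbij' (fun j => (1 - j) / 4) (fun j => 1 - 4 * j) ?_ ?_ ?_ ?_
      · intro j hj
        obtain ⟨h3, h4⟩ := Finset.mem_filter.1 (Finset.mem_coe.1 hj)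
        refine Finset.mem_coe.2 ((m3 _).2 ?_)
        have h3 := (m1 _).1 h3
        obtain ⟨i, rfl⟩ : ∃ i, j = 1 - 4 * i := ⟨(1 - j) / 4, by omega⟩
        dsimp only
        rw [show (1 - (1 - 4 * i)) / 4 = i by omega]
        push_cast at h3 ⊢
        linear_combination h3
      · intro j hj
        have h3 := (m3 _).1 (Finset.mem_coe.1 hj)
        refine Finset.mem_coe.2 (Finset.mem_filter.2 ⟨(m1 _).2 ?_, by dsimp only; omega⟩)
        push_cast at h3 ⊢
        linear_combination h3
      · intro j hj
        obtain ⟨h3, h4⟩ := Finset.mem_filter.1 (Finset.mem_coe.1 hj)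
        dsimp only; omega
      · intro j hj
        dsimp only; omega
    rw [← e2, e3, e4]
    push_cast
    ring

theorem final_alg {R : Type*} [CommRing R]
    (G q f2 f4 f5 f8 f10 f20 p p4 p5 p20 s2 s4 s8 s10 s20 s40 V S5 S4 S20 A B U10 U2 U4 P h : R)
    (h1 : f5 ^ 2 * G = p * s2 - q * (p5 * s10))
    (h2 : f5 ^ 2 * p5 = f10 + 4 * V)
    (h3 : p5 = 1 + 2 * S5) (h4 : p = p4 + 2 * (q * s8)) (h5 : p5 = p20 + 2 * (q ^ 5 * s40))
    (h6 : p4 = 1 + 2 * S4) (h7 : p20 = 1 + 2 * S20)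
    (hA : f4 * f20 = s8 + q ^ 4 * s40 + 2 * A)
    (hB : f2 * f10 = s4 + q ^ 2 * s20 + 2 * B)
    (hU10 : f10 ^ 2 = f20 + 2 * U10) (hU2 : f2 ^ 2 = f4 + 2 * U2) (hU4 : f4 ^ 2 = f8 + 2 * U4)
    (hP : s2 = f2 ^ 3 + 2 * P) (hh : f10 * h = 1) :
    ∃ W, G = h * (p4 * p20 * s2) + 2 * (q * (f8 * s4)) + 2 * (q ^ 3 * (f8 * s20))
      - q * (h * s10) + 4 * W := by
  have e1 : s2 * (s8 + q ^ 4 * s40) = f10 * f8 * (s4 + q ^ 2 * s20) +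
      2 * (P * f4 * f20 - A * s2 + U2 * f2 * f4 * f20 + f2 * U4 * f20 - f2 * f8 * U10
        + f8 * f10 * B) * (-1) + 4 * (P * f4 * f20 - A * s2 + U2 * f2 * f4 * f20
        + f2 * U4 * f20 - f2 * f8 * U10 + f8 * f10 * B) := by
    linear_combination -s2 * hA + f4 * f20 * hP + f2 * f4 * f20 * hU2 + f2 * f20 * hU4
      - f2 * f8 * hU10 + f8 * f10 * hB
  generalize P * f4 * f20 - A * s2 + U2 * f2 * f4 * f20 + f2 * U4 * f20 - f2 * f8 * U10
        + f8 * f10 * B = W2 at e1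
  have e2 : p * p5 = p4 * p20 + 2 * (q * (s8 + q ^ 4 * s40)) +
      4 * (q * s8 * S20 + q ^ 5 * s40 * S4 + q ^ 6 * s8 * s40) := by
    rw [h4, h5, h6, h7]; ring
  have e3 : p5 ^ 2 = 1 + 4 * (S5 + S5 ^ 2) := by rw [h3]; ring
  generalize q * s8 * S20 + q ^ 5 * s40 * S4 + q ^ 6 * s8 * s40 = Y at e2
  generalize S5 + S5 ^ 2 = Z at e3
  have e4 : f10 * G = p4 * p20 * s2 + 2 * (q * (s2 * (s8 + q ^ 4 * s40))) - q * s10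
      + 4 * (Y * s2 - q * s10 * Z - V * G) := by
    linear_combination -G * h2 + p5 * h1 + s2 * e2 - q * s10 * e3
  refine ⟨h * (Y * s2 - q * s10 * Z - V * G) + q * h * W2, ?_⟩
  linear_combination h * e4 - G * hh + 2 * q * h * e1 + 2 * q * f8 * (s4 + q ^ 2 * s20) * hh

theorem G_mod4 : ∃ W g, G = ee 2 (ee 5 g * (ee 2 (th 1 1) * ee 10 (th 1 1) * th 1 3))
    + 2 * (X * ee 4 (ee 2 f * th 1 3)) + 2 * (X ^ 3 * ee 4 (ee 2 f * ee 5 (th 1 3)))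
    - X * ee 10 (g * th 1 3) + 4 * W := by
  obtain ⟨V, hV⟩ := phi_f
  obtain ⟨S, hS⟩ := phi_one
  obtain ⟨A, hA⟩ := ff5
  obtain ⟨U, hU⟩ := f_sq
  obtain ⟨P, hP⟩ := psi_f
  obtain ⟨g, hg⟩ := f_inv
  have h4 : th 1 1 = ee 4 (th 1 1) + 2 * (X * ee 8 (th 1 3)) := by
    rw [ee_th _ _ _ (by norm_num) (by norm_num), ee_th _ _ _ (by norm_num) (by norm_num)]
    exact phi_split
  have k2 := congrArg (ee 5) hV
  have k3 := congrArg (ee 5) hS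
  have k5 := congrArg (ee 5) h4
  have k6 := congrArg (ee 4) hS
  have k7 := congrArg (ee 20) hS
  have kA := congrArg (ee 4) hA
  have kB := congrArg (ee 2) hA
  have kU10 := congrArg (ee 10) hU
  have kU2 := congrArg (ee 2) hU
  have kU4 := congrArg (ee 4) hU
  have kP := congrArg (ee 2) hP
  have kh := congrArg (ee 10) hg
  simp only [map_mul, map_pow, map_add, map_one, map_ofNat, ee_X, ee_ee 5 2 10 rfl,
    ee_ee 5 4 20 rfl, ee_ee 5 8 40 rfl, ee_ee 4 5 20 rfl, ee_ee 4 2 8 rfl, ee_ee 4 10 40 rfl,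
    ee_ee 2 5 10 rfl, ee_ee 2 2 4 rfl, ee_ee 2 10 20 rfl, ee_ee 10 2 20 rfl]
    at k2 k3 k5 k6 k7 kA kB kU10 kU2 kU4 kP kh
  have k5' : ee 5 (th 1 1) = ee 20 (th 1 1) + 2 * (X ^ 5 * ee 40 (th 1 3)) := k5
  obtain ⟨W, hW⟩ := final_alg _ _ _ _ _ _ _ _ _ _ _ _ _ _ _ _ _ _ _ _ _ _ _ _ _ _ _ _ _
    G_main k2 k3 h4 k5' k6 k7 kA kB kU10 kU2 kU4 kP kh
  refine ⟨W, g, ?_⟩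
  simp only [map_mul, ee_ee 2 5 10 rfl, ee_ee 2 2 4 rfl, ee_ee 2 10 20 rfl, ee_ee 4 2 8 rfl,
    ee_ee 4 5 20 rfl]
  exact hW

theorem coeff_f_zero (i : ℕ) (hi : i % 5 = 3) : coeff i f = 0 := by
  rw [f]
  apply coeff_pentagonalSeries_eq_zero
  rintro ⟨k, rfl⟩
  have h := two_mul_natCast_pentagonal k
  have h1 : (k * (3 * k - 1)) % 5 = 1 := by omega
  rw [Int.mul_emod, Int.sub_emod, Int.mul_emod 3] at h1
  have h2 : k % 5 = 0 ∨ k % 5 = 1 ∨ k % 5 = 2 ∨ k % 5 = 3 ∨ k % 5 = 4 := by omega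
  rcases h2 with h2 | h2 | h2 | h2 | h2 <;> rw [h2] at h1 <;> norm_num at h1

theorem coeff_last (n : ℕ) (F : ℤ⟦X⟧) : coeff (5 * n + 1) (ee 2 f * ee 5 F) = 0 := by
  rw [coeff_mul]
  refine Finset.sum_eq_zero fun p hp => ?_
  have hp := Finset.HasAntidiagonal.mem_antidiagonal.1 hp
  rw [coeff_ee, coeff_ee]
  split_ifs with h1 h2
  · rw [coeff_f_zero _ (by omega), zero_mul]
  all_goals simp

theorem final (n : ℕ) : (4 : ℤ) ∣ (b5' (20 * n + 7) : ℤ) := by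
  obtain ⟨W, g, h⟩ := G_mod4
  have h1 : coeff (20 * n + 7) G = (b5' (20 * n + 7) : ℤ) := by rw [G, coeff_mk]
  rw [← h1, h]
  have hm : ∀ (F : ℤ⟦X⟧) k, coeff k (2 * F) = 2 * coeff k F := fun F k => by
    rw [two_mul, map_add, two_mul]
  have hm4 : ∀ (F : ℤ⟦X⟧) k, coeff k (4 * F) = 4 * coeff k F := fun F k => by
    rw [show (4 : ℤ⟦X⟧) * F = 2 * (2 * F) by ring, hm, hm]; ring
  rw [map_add, map_sub, map_add, map_add, hm, hm, hm4, coeff_ee, if_neg (by omega),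
    show 20 * n + 7 = (20 * n + 6) + 1 by ring, coeff_succ_X_mul, coeff_succ_X_mul, coeff_ee,
    if_neg (by omega), coeff_ee, if_neg (by omega),
    show 20 * n + 6 + 1 = (20 * n + 4) + 3 by ring, coeff_X_pow_mul, coeff_ee, if_pos (by omega),
    show (20 * n + 4) / 4 = 5 * n + 1 by omega, coeff_last]
  exact ⟨coeff (20 * n + 4 + 3) W, by ring⟩

end B5

theorem b5'_20n7_mod4 (n : ℕ) : b5' (20 * n + 7) ≡ 0 [MOD 4] := by
  have h := B5.final n
  rw [Nat.modEq_zero_iff_dvd]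
  exact_mod_cast h
end

section
/- For every nonnegative integer n, b'₅(20n+15) ≡ 0 (mod 4). -/
open PowerSeries

namespace B5aux

/-! ### Infinite products of factors `1 + ε X^k` -/

open scoped Classical in
/-- factor of the product at `k` -/
noncomputable def fac (ε : ℤ) (A : ℕ → Prop) (k : ℕ) : ℤ⟦X⟧ :=
  if A k ∧ 0 < k then 1 + C ε * X ^ k else 1

/-- partial product -/
noncomputable def prf (ε : ℤ) (A : ℕ → Prop) (n : ℕ) : ℤ⟦X⟧ :=
  ∏ k ∈ Finset.range n, fac ε A k

/-- infinite product -/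
noncomputable def Pr (ε : ℤ) (A : ℕ → Prop) : ℤ⟦X⟧ :=
  PowerSeries.mk fun n => coeff n (prf ε A (n + 1))

/-- residue class -/
def Rs (r c : ℕ) : ℕ → Prop := fun k => k % c = r % c

lemma prf_succ (ε A n) : prf ε A (n + 1) = prf ε A n * fac ε A n := by
  simp [prf, Finset.prod_range_succ]

lemma fac_dvd (ε A k) : (X : ℤ⟦X⟧) ^ k ∣ fac ε A k - 1 := by
  unfold fac
  split_ifs
  · exact ⟨C ε, by ring⟩
  · simp

lemma prf_dvd (ε A) {n m : ℕ} (h : n ≤ m) : (X : ℤ⟦X⟧) ^ n ∣ prf ε A m - prf ε A n := by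
  induction m, h using Nat.le_induction with
  | base => simp
  | succ m hm ih =>
    have h1 : (X : ℤ⟦X⟧) ^ n ∣ fac ε A m - 1 := (pow_dvd_pow _ hm).trans (fac_dvd ε A m)
    have : prf ε A (m + 1) - prf ε A n
        = prf ε A m * (fac ε A m - 1) + (prf ε A m - prf ε A n) := by
      rw [prf_succ]; ring
    rw [this]
    exact dvd_add (h1.mul_left _) ih

lemma coeff_eq_of_dvd {F G : ℤ⟦X⟧} {n m : ℕ} (h : (X : ℤ⟦X⟧) ^ n ∣ F - G) (hm : m < n) :
    coeff m F = coeff m G := by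
  have := X_pow_dvd_iff.1 h m hm
  rw [map_sub] at this
  linarith

lemma Pr_dvd (ε A) (n : ℕ) : (X : ℤ⟦X⟧) ^ n ∣ Pr ε A - prf ε A n := by
  rw [X_pow_dvd_iff]
  intro m hm
  rw [map_sub, Pr, coeff_mk, coeff_eq_of_dvd (prf_dvd ε A (show m + 1 ≤ n from hm)) (Nat.lt_succ_self m)]
  simp

lemma eq_of_dvd {F G : ℤ⟦X⟧} (h : ∀ n, (X : ℤ⟦X⟧) ^ n ∣ F - G) : F = G := by
  ext n
  exact coeff_eq_of_dvd (h (n + 1)) (Nat.lt_succ_self n)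

lemma dvd_mul_sub {d a b c e : ℤ⟦X⟧} (h : d ∣ a - b) (h' : d ∣ c - e) : d ∣ a * c - b * e := by
  have : a * c - b * e = (a - b) * c + b * (c - e) := by ring
  rw [this]
  exact dvd_add (h.mul_right _) (h'.mul_left _)

lemma dvd_sub_trans {d a b c : ℤ⟦X⟧} (h : d ∣ a - b) (h' : d ∣ b - c) : d ∣ a - c := by
  have : a - c = (a - b) + (b - c) := by ring
  rw [this]; exact dvd_add h h'

lemma dvd_sub_symm {d a b : ℤ⟦X⟧} (h : d ∣ a - b) : d ∣ b - a := by
  rw [← neg_sub]; exact (dvd_neg).2 h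

lemma Pr_union {ε : ℤ} {A B D : ℕ → Prop} (h : ∀ k, 0 < k → (D k ↔ A k ∨ B k))
    (h' : ∀ k, 0 < k → A k → B k → False) : Pr ε D = Pr ε A * Pr ε B := by
  have key : ∀ n, prf ε D n = prf ε A n * prf ε B n := by
    intro n
    rw [prf, prf, prf, ← Finset.prod_mul_distrib]
    refine Finset.prod_congr rfl fun k _ => ?_
    unfold fac
    have := h k
    have := h' k
    by_cases hk : 0 < k <;> by_cases ha : A k <;> by_cases hb : B k <;> simp_all
  refine eq_of_dvd fun n => ?_
  refine dvd_sub_trans (Pr_dvd ε D n) ?_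
  rw [key]
  exact dvd_sub_symm (dvd_mul_sub (Pr_dvd ε A n) (Pr_dvd ε B n))

lemma Pr_double {A B : ℕ → Prop} (h : ∀ k, B (2 * k) ↔ A k) (h' : ∀ k, ¬ B (2 * k + 1)) :
    Pr 1 A * Pr (-1) A = Pr (-1) B := by
  have key : ∀ n, prf 1 A n * prf (-1) A n = prf (-1) B (2 * n) := by
    intro n
    induction n with
    | zero => simp [prf]
    | succ n ih =>
      rw [show 2 * (n + 1) = 2 * n + 1 + 1 by ring, prf_succ, prf_succ, prf_succ, prf_succ, ← ih]
      have e1 : fac (-1) B (2 * n + 1) = 1 := by simp [fac, h']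
      have e2 : fac (-1) B (2 * n) = fac 1 A n * fac (-1) A n := by
        unfold fac
        by_cases hk : 0 < n <;> by_cases ha : A n <;> simp_all
        ring
      rw [e1, e2]; ring
  refine eq_of_dvd fun n => ?_
  refine dvd_sub_trans (dvd_mul_sub (Pr_dvd 1 A n) (Pr_dvd (-1) A n)) ?_
  rw [key]
  refine dvd_sub_symm ((pow_dvd_pow X (by omega : n ≤ 2 * n)).trans (Pr_dvd (-1) B (2 * n)))

lemma int_dvd_iff (c : ℤ) (F : ℤ⟦X⟧) : (C c ∣ F) ↔ ∀ n, c ∣ coeff n F := by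
  constructor
  · rintro ⟨G, rfl⟩ n
    rw [coeff_C_mul]
    exact dvd_mul_right _ _
  · intro h
    choose g hg using h
    refine ⟨PowerSeries.mk g, ?_⟩
    ext n
    rw [coeff_C_mul, coeff_mk, hg]

lemma Pr_mod_two (A : ℕ → Prop) : (C 2 : ℤ⟦X⟧) ∣ Pr 1 A - Pr (-1) A := by
  have key : ∀ n, (C 2 : ℤ⟦X⟧) ∣ prf 1 A n - prf (-1) A n := by
    intro n
    induction n with
    | zero => simp [prf]
    | succ n ih =>
      rw [prf_succ, prf_succ]
      refine dvd_mul_sub ih ?_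
      unfold fac
      split_ifs
      · refine ⟨X ^ n, ?_⟩
        have : (C 2 : ℤ⟦X⟧) = 2 := by simp
        rw [this]; simp; ring
      · simp
  rw [int_dvd_iff]
  intro n
  have := (int_dvd_iff _ _).1 (key (n + 1)) n
  simpa [Pr] using this

/-- supported on multiples of `d` -/
def Sd (d : ℕ) (F : ℤ⟦X⟧) : Prop := ∀ n, ¬ d ∣ n → coeff n F = 0

lemma Sd.mul {d : ℕ} {F G : ℤ⟦X⟧} (hF : Sd d F) (hG : Sd d G) : Sd d (F * G) := by
  intro n hn
  rw [coeff_mul]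
  refine Finset.sum_eq_zero fun p hp => ?_
  rw [Finset.HasAntidiagonal.mem_antidiagonal] at hp
  by_cases h1 : d ∣ p.1
  · have h2 : ¬ d ∣ p.2 := fun h2 => hn (hp ▸ dvd_add h1 h2)
    rw [hG _ h2, mul_zero]
  · rw [hF _ h1, zero_mul]

lemma Sd.one (d : ℕ) : Sd d 1 := by
  intro n hn
  rw [coeff_one, if_neg]
  rintro rfl
  simp at hn

lemma Sd.mono {d e : ℕ} (h : d ∣ e) {F : ℤ⟦X⟧} (hF : Sd e F) : Sd d F :=
  fun n hn => hF n fun h' => hn (h.trans h')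

lemma Sd_Pr {d : ℕ} {ε : ℤ} {A : ℕ → Prop} (h : ∀ k, A k → d ∣ k) : Sd d (Pr ε A) := by
  have key : ∀ n, Sd d (prf ε A n) := by
    intro n
    induction n with
    | zero => simpa [prf] using Sd.one d
    | succ n ih =>
      rw [prf_succ]
      refine ih.mul ?_
      unfold fac
      split_ifs with hA
      · intro m hm
        have : m ≠ n := fun e => hm (e ▸ h n hA.1)
        have h0 : m ≠ 0 := by rintro rfl; simp at hm
        rw [map_add, coeff_C_mul, coeff_one, coeff_X_pow, if_neg h0, if_neg this]; simp
      · exact Sd.one d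
  intro n hn
  rw [Pr, coeff_mk, key _ n hn]

lemma coeff_zero_Pr (ε A) : coeff 0 (Pr ε A) = 1 := by
  rw [Pr, coeff_mk, prf, Finset.prod_range_succ]
  simp [fac]

lemma inv_of_one {F : ℤ⟦X⟧} (h : coeff 0 F = 1) : ∃ G, F * G = 1 := by
  have : IsUnit F := by
    rw [isUnit_iff_constantCoeff, ← coeff_zero_eq_constantCoeff_apply, h]
    exact isUnit_one
  exact this.exists_right_inv

lemma prf_prog (ε : ℤ) {r c : ℕ} (hr : 1 ≤ r) (hc : r ≤ c) (n : ℕ) :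
    prf ε (Rs r c) (c * n + 1) = ∏ i ∈ Finset.range n, (1 + C ε * X ^ (c * i + r)) := by
  induction n with
  | zero => simp [prf, fac]
  | succ n ih =>
    rw [Finset.prod_range_succ, ← ih, show c * (n + 1) + 1 = c * n + 1 + c by ring, prf,
      Finset.prod_range_add, ← prf]
    congr 1
    rw [Finset.prod_eq_single (r - 1)]
    · have e : c * n + 1 + (r - 1) = c * n + r := by omega
      rw [e, fac, if_pos]
      refine ⟨?_, by omega⟩
      simp [Rs]
    · intro b hb hne
      rw [Finset.mem_range] at hb
      rw [fac, if_neg]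
      rintro ⟨h, -⟩
      unfold Rs at h
      rw [show c * n + 1 + b = (b + 1) + c * n by ring, Nat.add_mul_mod_self_left] at h
      rcases Nat.lt_or_ge (b + 1) c with h1 | h1
      · rw [Nat.mod_eq_of_lt h1] at h
        rcases Nat.lt_or_ge r c with h2 | h2
        · rw [Nat.mod_eq_of_lt h2] at h; omega
        · have : r = c := by omega
          subst this; simp at h
      · have : b + 1 = c := by omega
        rw [this, Nat.mod_self] at h
        rcases Nat.lt_or_ge r c with h2 | h2
        · rw [Nat.mod_eq_of_lt h2] at h; omega
        · omega
    · intro h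
      rw [Finset.mem_range] at h
      omega

lemma Pr_prog (ε : ℤ) {r c : ℕ} (hr : 1 ≤ r) (hc : r ≤ c) (n : ℕ) :
    (X : ℤ⟦X⟧) ^ (c * n + 1) ∣ Pr ε (Rs r c)
      - ∏ i ∈ Finset.range n, (1 + C ε * X ^ (c * i + r)) := by
  rw [← prf_prog ε hr hc]
  exact Pr_dvd _ _ _

/-! ### Gaussian binomials -/

/-- Gaussian binomial coefficient -/
noncomputable def gb (p : ℤ⟦X⟧) : ℕ → ℕ → ℤ⟦X⟧
  | _, 0 => 1
  | 0, _ + 1 => 0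
  | n + 1, k + 1 => gb p n (k + 1) + p ^ (n - k) * gb p n k

/-- `(p;p)_m` -/
noncomputable def po (p : ℤ⟦X⟧) (m : ℕ) : ℤ⟦X⟧ := ∏ i ∈ Finset.range m, (1 - p ^ (i + 1))

lemma po_succ (p m) : po p (m + 1) = po p m * (1 - p ^ (m + 1)) := by
  simp [po, Finset.prod_range_succ]

lemma gb_zero (p n) : gb p n 0 = 1 := by cases n <;> rfl

lemma gb_succ (p n k) : gb p (n + 1) (k + 1) = gb p n (k + 1) + p ^ (n - k) * gb p n k := rfl

lemma gb_lt (p) : ∀ n k, n < k → gb p n k = 0 := by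
  intro n
  induction n with
  | zero => intro k hk; obtain ⟨k, rfl⟩ := Nat.exists_eq_add_of_lt hk; simp [gb]
  | succ n ih =>
    intro k hk
    cases k with
    | zero => omega
    | succ k => rw [gb_succ, ih _ (by omega), ih _ (by omega)]; simp

lemma gb_self (p) : ∀ n, gb p n n = 1 := by
  intro n
  induction n with
  | zero => rfl
  | succ n ih => rw [gb_succ, gb_lt _ _ _ (Nat.lt_succ_self n), ih]; simp

lemma gb_po (p) : ∀ n j k, j + k = n → gb p n j * po p j * po p k = po p n := by
  intro n
  induction n with
  | zero =>
    intro j k h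
    obtain rfl : j = 0 := by omega
    obtain rfl : k = 0 := by omega
    simp [gb_zero, po]
  | succ n ih =>
    intro j k h
    cases j with
    | zero =>
      obtain rfl : k = n + 1 := by omega
      simp [gb_zero, po]
    | succ j =>
      cases k with
      | zero =>
        obtain rfl : j = n := by omega
        rw [gb_self]; simp [po]
      | succ k =>
        obtain rfl : n = j + k + 1 := by omega
        have h1 := ih (j + 1) k (by omega)
        have h2 := ih j (k + 1) (by omega)
        rw [gb_succ, show j + k + 1 - j = k + 1 by omega, po_succ p (j + k + 1)]
        have h3 : po p (j + 1) = po p j * (1 - p ^ (j + 1)) := po_succ _ _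
        have h4 : po p (k + 1) = po p k * (1 - p ^ (k + 1)) := po_succ _ _
        calc _ = (gb p (j + k + 1) (j + 1) * po p (j + 1) * po p k) * (1 - p ^ (k + 1))
              + p ^ (k + 1) * (1 - p ^ (j + 1)) * (gb p (j + k + 1) j * po p j * po p (k + 1)) := by
                rw [h3, h4]; ring
          _ = _ := by rw [h1, h2]; ring

lemma q_binom (p x y : ℤ⟦X⟧) (N : ℕ) :
    ∏ i ∈ Finset.range N, (y + x * p ^ i)
      = ∑ j ∈ Finset.range (N + 1), p ^ (j.choose 2) * gb p N j * x ^ j * y ^ (N - j) := by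
  induction N with
  | zero => simp [gb_zero]
  | succ N ih =>
    rw [Finset.prod_range_succ, ih, Finset.sum_range_succ' _ (N + 1)]
    have e : ∀ j ∈ Finset.range (N + 1),
        p ^ ((j + 1).choose 2) * gb p (N + 1) (j + 1) * x ^ (j + 1) * y ^ (N + 1 - (j + 1))
        = y * (p ^ ((j + 1).choose 2) * gb p N (j + 1) * x ^ (j + 1) * y ^ (N - (j + 1)))
          + x * p ^ N * (p ^ (j.choose 2) * gb p N j * x ^ j * y ^ (N - j)) := by
      intro j hj
      rw [Finset.mem_range] at hj
      have hc : (j + 1).choose 2 = j + j.choose 2 := by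
        rw [Nat.choose_succ_succ' j 1]; simp
      have h2 : p ^ ((j + 1).choose 2) * p ^ (N - j) = p ^ N * p ^ (j.choose 2) := by
        rw [← pow_add, ← pow_add, hc]; congr 1; omega
      rw [gb_succ, show N + 1 - (j + 1) = N - j by omega]
      rcases Nat.lt_or_ge j N with h | h
      · have h3 : y ^ (N - j) = y * y ^ (N - (j + 1)) := by
          rw [← pow_succ']; congr 1; omega
        linear_combination (gb p N j * x ^ (j + 1) * y ^ (N - j)) * h2
          + p ^ ((j + 1).choose 2) * gb p N (j + 1) * x ^ (j + 1) * h3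
      · rw [gb_lt p N (j + 1) (by omega)]
        linear_combination (gb p N j * x ^ (j + 1) * y ^ (N - j)) * h2
    rw [Finset.sum_congr rfl e, Finset.sum_add_distrib, ← Finset.mul_sum, ← Finset.mul_sum]
    have e2 := Finset.sum_range_succ'
      (fun j => p ^ (j.choose 2) * gb p N j * x ^ j * y ^ (N - j)) (N + 1)
    rw [Finset.sum_range_succ, gb_lt p N (N + 1) (by omega)] at e2
    simp only [gb_zero] at e2 ⊢
    rw [show N + 1 - 0 = (N - 0) + 1 by omega, pow_succ]
    linear_combination y * e2

/-! ### Theta series -/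

/-- `∑ X^(e i)` -/
noncomputable def Th {ι : Type} (e : ι → ℕ) : ℤ⟦X⟧ :=
  PowerSeries.mk fun n => (Nat.card {x // e x = n} : ℤ)

/-- finite fibres -/
def FF {ι : Type} (e : ι → ℕ) : Prop := ∀ n, Finite {x // e x = n}

lemma Th_mul {ι κ : Type} {e : ι → ℕ} {f : κ → ℕ} (he : FF e) (hf : FF f) :
    Th e * Th f = Th (fun p : ι × κ => e p.1 + f p.2) := by
  ext n
  rw [coeff_mul]
  simp only [Th, coeff_mk]
  have eq : {p : ι × κ // e p.1 + f p.2 = n} ≃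
      Σ a : {a : ℕ × ℕ // a ∈ Finset.HasAntidiagonal.antidiagonal n},
        ({x // e x = a.1.1} × {y // f y = a.1.2}) :=
    { toFun := fun p => ⟨⟨(e p.1.1, f p.1.2), by simpa using p.2⟩, ⟨⟨p.1.1, rfl⟩, ⟨p.1.2, rfl⟩⟩⟩
      invFun := fun q => ⟨(q.2.1.1, q.2.2.1), by
        rw [q.2.1.2, q.2.2.2]; exact Finset.HasAntidiagonal.mem_antidiagonal.1 q.1.2⟩
      left_inv := fun p => rfl
      right_inv := by
        rintro ⟨⟨⟨a, b⟩, h⟩, ⟨x, hx⟩, ⟨y, hy⟩⟩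
        dsimp only at hx hy
        subst hx hy
        rfl }
  rw [Nat.card_congr eq]
  have := he
  have : ∀ a : {a : ℕ × ℕ // a ∈ Finset.HasAntidiagonal.antidiagonal n},
      Finite ({x // e x = a.1.1} × {y // f y = a.1.2}) := fun a => by
    have := he a.1.1
    have := hf a.1.2
    infer_instance
  rw [Nat.card_sigma]
  simp only [Nat.card_prod]
  push_cast
  exact (Finset.sum_coe_sort (Finset.HasAntidiagonal.antidiagonal n)
    (fun a => (Nat.card {x // e x = a.1} : ℤ) * (Nat.card {y // f y = a.2} : ℤ))).symm

lemma Th_equiv {ι κ : Type} (g : ι ≃ κ) {e : ι → ℕ} {f : κ → ℕ} (h : ∀ i, f (g i) = e i) :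
    Th e = Th f := by
  ext n
  simp only [Th, coeff_mk]
  congr 1
  exact Nat.card_congr (g.subtypeEquiv fun i => by rw [h])

lemma Th_sum {ι κ : Type} {e : ι → ℕ} {f : κ → ℕ} (he : FF e) (hf : FF f) :
    Th (Sum.elim e f) = Th e + Th f := by
  ext n
  simp only [Th, coeff_mk, map_add]
  have := he n
  have := hf n
  have e1 : {x : ι ⊕ κ // Sum.elim e f x = n} ≃ {x // e x = n} ⊕ {x // f x = n} :=
    Equiv.subtypeSum
  rw [Nat.card_congr e1, Nat.card_sum]
  push_cast
  rfl

lemma FF_prod {ι κ : Type} {e : ι → ℕ} {f : κ → ℕ} (he : FF e) (hf : FF f) :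
    FF (fun p : ι × κ => e p.1 + f p.2) := by
  intro n
  have h1 : ∀ m, Set.Finite {x | e x = m} := fun m => he m
  have h2 : ∀ m, Set.Finite {x | f x = m} := fun m => hf m
  have : Set.Finite {p : ι × κ | e p.1 + f p.2 = n} := by
    refine Set.Finite.subset (((Set.finite_Iic n).biUnion fun m _ => h1 m).prod
      ((Set.finite_Iic n).biUnion fun m _ => h2 m)) ?_
    rintro ⟨x, y⟩ h
    simp only [Set.mem_ofPred_eq] at h
    simp only [Set.mem_prod, Set.mem_iUnion, Set.mem_Iic, Set.mem_ofPred_eq]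
    exact ⟨⟨e x, by omega, rfl⟩, ⟨f y, by omega, rfl⟩⟩
  exact this

lemma Sd_Th {ι : Type} {e : ι → ℕ} {d : ℕ} (h : ∀ i, d ∣ e i) : Sd d (Th e) := by
  intro n hn
  simp only [Th, coeff_mk]
  have : IsEmpty {x // e x = n} := ⟨fun x => hn (x.2 ▸ h x.1)⟩
  simp

/-- exponent of the Ramanujan theta function -/
def ee (α β : ℕ) (k : ℤ) : ℕ := ((α * (k * (k + 1)) + β * (k * (k - 1))) / 2).toNat

lemma kk_nonneg (k : ℤ) : 0 ≤ k * (k + 1) := by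
  rcases le_or_gt 0 k with h | h
  · positivity
  · nlinarith

lemma kk_even (k : ℤ) : 2 ∣ k * (k + 1) := (Int.even_mul_succ_self k).two_dvd

lemma ee_spec (α β : ℕ) (k : ℤ) :
    2 * (ee α β k : ℤ) = α * (k * (k + 1)) + β * (k * (k - 1)) := by
  have h1 := kk_nonneg k
  have h2 : 0 ≤ k * (k - 1) := by have := kk_nonneg (k - 1); nlinarith
  have h3 := kk_even k
  have h4 : 2 ∣ k * (k - 1) := by
    have := kk_even (k - 1); rw [sub_add_cancel, mul_comm] at this; exact this
  have h5 : 0 ≤ (α * (k * (k + 1)) + β * (k * (k - 1)) : ℤ) := by positivity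
  have h6 : (2 : ℤ) ∣ α * (k * (k + 1)) + β * (k * (k - 1)) :=
    dvd_add (h3.mul_left _) (h4.mul_left _)
  unfold ee
  omega

lemma ee_FF {α : ℕ} (β : ℕ) (h : 1 ≤ α) : FF (ee α β) := by
  intro n
  have : Set.Finite {k : ℤ | ee α β k = n} := by
    refine Set.Finite.subset (Set.finite_Icc (-(2 * n + 2 : ℤ)) (2 * n + 2)) ?_
    intro k hk
    simp only [Set.mem_ofPred_eq] at hk
    have hs := ee_spec α β k
    rw [hk] at hs
    have h1 := kk_nonneg k
    have h2 : 0 ≤ k * (k - 1) := by have := kk_nonneg (k - 1); nlinarith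
    have h3 : (1 : ℤ) ≤ α := by exact_mod_cast h
    have h4 : k * (k + 1) ≤ 2 * n := by
      have : (0 : ℤ) ≤ β * (k * (k - 1)) := by positivity
      nlinarith
    rw [Set.mem_Icc]
    constructor <;> nlinarith
  exact this

lemma ee_ge {α β : ℕ} (h : 1 ≤ α) (h' : 1 ≤ β) (k : ℤ) : k.natAbs ≤ ee α β k := by
  have hs := ee_spec α β k
  have h1 := kk_nonneg k
  have h2 : 0 ≤ k * (k - 1) := by have := kk_nonneg (k - 1); nlinarith
  have h3 : (1 : ℤ) ≤ α := by exact_mod_cast h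
  have h4 : (1 : ℤ) ≤ β := by exact_mod_cast h'
  have h5 : k * k ≤ ee α β k := by nlinarith
  have h6 : (k.natAbs : ℤ) ≤ k * k := by
    rw [← Int.natAbs_mul_self]
    exact_mod_cast Nat.le_mul_self _
  exact_mod_cast h6.trans h5

lemma finite_jtp {α β c : ℕ} (hα : 1 ≤ α) (hβ : 1 ≤ β) (hc : c = α + β) (n : ℕ) :
    (∏ i ∈ Finset.range n, (1 + X ^ (c * i + α))) * (∏ i ∈ Finset.range n, (1 + X ^ (c * i + β)))
      = ∑ j ∈ Finset.range (2 * n + 1), gb (X ^ c) (2 * n) j * X ^ (ee α β ((j : ℤ) - n)) := by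
  have hq := q_binom (X ^ c) (X ^ α) (X ^ (c * n)) (2 * n)
  have hL : ∏ i ∈ Finset.range (2 * n), ((X : ℤ⟦X⟧) ^ (c * n) + X ^ α * (X ^ c) ^ i)
      = X ^ (∑ i ∈ Finset.range n, (α + c * i) + c * n * n) *
        ((∏ i ∈ Finset.range n, (1 + X ^ (c * i + α)))
          * (∏ i ∈ Finset.range n, (1 + X ^ (c * i + β)))) := by
    rw [two_mul, Finset.prod_range_add]
    have a1 : ∏ i ∈ Finset.range n, ((X : ℤ⟦X⟧) ^ (c * n) + X ^ α * (X ^ c) ^ i)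
        = X ^ (∑ i ∈ Finset.range n, (α + c * i)) *
          ∏ i ∈ Finset.range n, (1 + X ^ (c * i + β)) := by
      rw [← Finset.prod_range_reflect (fun i => (1 + (X : ℤ⟦X⟧) ^ (c * i + β))),
        ← Finset.prod_pow_eq_pow_sum, ← Finset.prod_mul_distrib]
      refine Finset.prod_congr rfl fun i hi => ?_
      rw [Finset.mem_range] at hi
      have : c * n = α + c * i + (c * (n - 1 - i) + β) := by
        obtain ⟨d, rfl⟩ : ∃ d, n = i + d + 1 := ⟨n - i - 1, by omega⟩
        rw [show i + d + 1 - 1 - i = d by omega, hc]; ring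
      rw [this, ← pow_mul, ← pow_add, mul_add, mul_one, ← pow_add, add_comm]
    have a2 : ∏ i ∈ Finset.range n, ((X : ℤ⟦X⟧) ^ (c * n) + X ^ α * (X ^ c) ^ (n + i))
        = X ^ (c * n * n) * ∏ i ∈ Finset.range n, (1 + X ^ (c * i + α)) := by
      rw [pow_mul _ (c * n) n]
      conv_rhs => rw [show ((X : ℤ⟦X⟧) ^ (c * n)) ^ n = ∏ i ∈ Finset.range n, X ^ (c * n) by simp]
      rw [← Finset.prod_mul_distrib]
      refine Finset.prod_congr rfl fun i hi => ?_
      ring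
    rw [a1, a2, pow_add]; ring
  rw [hL] at hq
  have hne : (X : ℤ⟦X⟧) ^ (∑ i ∈ Finset.range n, (α + c * i) + c * n * n) ≠ 0 :=
    pow_ne_zero _ X_ne_zero
  refine mul_left_cancel₀ hne ?_
  rw [hq, Finset.mul_sum]
  refine Finset.sum_congr rfl fun j hj => ?_
  rw [Finset.mem_range] at hj
  have hexp : c * j.choose 2 + α * j + c * n * (2 * n - j)
      = (∑ i ∈ Finset.range n, (α + c * i) + c * n * n) + ee α β ((j : ℤ) - n) := by
    have s1 : (2 : ℤ) * (∑ i ∈ Finset.range n, (α + c * i) : ℕ) = 2 * α * n + c * (n * (n - 1)) := by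
      clear hj hL hq hne
      induction n with
      | zero => simp
      | succ n ih =>
        rw [Finset.sum_range_succ]
        push_cast at ih ⊢
        linear_combination ih
    have s2 : (2 : ℤ) * (j.choose 2 : ℕ) = j * (j - 1) := by
      clear hj
      induction j with
      | zero => simp
      | succ j ih =>
        rw [Nat.choose_succ_succ' j 1]
        push_cast at ih ⊢
        simp only [Nat.choose_one_right]
        linear_combination ih
    have s3 := ee_spec α β ((j : ℤ) - n)
    have s4 : ((2 * n - j : ℕ) : ℤ) = 2 * n - j := by omega
    have hc' : (c : ℤ) = α + β := by exact_mod_cast hc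
    zify
    rw [s4]
    push_cast at s1
    have : (2 : ℤ) ≠ 0 := by norm_num
    refine mul_left_cancel₀ this ?_
    rw [hc'] at *
    linear_combination ((α : ℤ) + β) * s2 - s1 - s3
  calc _ = gb (X ^ c) (2 * n) j * X ^ (c * j.choose 2 + α * j + c * n * (2 * n - j)) := by
        rw [pow_add, pow_add, ← pow_mul, ← pow_mul, ← pow_mul]; ring
    _ = _ := by rw [hexp, pow_add]; ring

lemma po_dvd {c : ℕ} (hc : 1 ≤ c) {μ m : ℕ} (h : μ ≤ m) :
    (X : ℤ⟦X⟧) ^ (c * μ + 1) ∣ Pr (-1) (Rs c c) - po (X ^ c) m := by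
  have h1 := Pr_prog (-1) hc le_rfl m
  have h2 : ∏ i ∈ Finset.range m, (1 + C (-1) * (X : ℤ⟦X⟧) ^ (c * i + c)) = po (X ^ c) m := by
    refine Finset.prod_congr rfl fun i _ => ?_
    rw [← pow_mul, mul_add, mul_one]; simp [sub_eq_add_neg]
  rw [h2] at h1
  refine (pow_dvd_pow X ?_).trans h1
  have := Nat.mul_le_mul_left c h
  omega

lemma gb_dvd {c : ℕ} (hc : 1 ≤ c) {n j μ : ℕ} (h : μ ≤ j) (h' : μ + j ≤ n) :
    (X : ℤ⟦X⟧) ^ (c * μ + 1) ∣ Pr (-1) (Rs c c) * gb (X ^ c) n j - 1 := by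
  set M := Pr (-1) (Rs c c) with hM
  obtain ⟨V, hV⟩ := inv_of_one (coeff_zero_Pr (-1) (Rs c c))
  rw [← hM] at hV
  have e := gb_po (X ^ c) n j (n - j) (by omega)
  have d1 := po_dvd hc h
  have d2 := po_dvd hc (show μ ≤ n - j by omega)
  have d3 := po_dvd hc (show μ ≤ n by omega)
  rw [← hM] at d1 d2 d3
  have d4 : (X : ℤ⟦X⟧) ^ (c * μ + 1) ∣ gb (X ^ c) n j * (M * M) - M := by
    refine dvd_sub_trans (b := po (X ^ c) n) ?_ (dvd_sub_symm d3)
    rw [← e, mul_assoc]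
    exact dvd_mul_sub (by simp) (dvd_mul_sub d1 d2)
  have : M * gb (X ^ c) n j - 1 = V * (gb (X ^ c) n j * (M * M) - M) := by
    linear_combination (1 - gb (X ^ c) n j * M) * hV
  rw [this]
  exact d4.mul_left _

theorem jtp {α β c : ℕ} (hα : 1 ≤ α) (hβ : 1 ≤ β) (hc : c = α + β) :
    Th (ee α β) = Pr (-1) (Rs c c) * (Pr 1 (Rs α c) * Pr 1 (Rs β c)) := by
  refine eq_of_dvd fun n => ?_
  have hn : n ≤ c * n + 1 := by nlinarith
  have d1 := (pow_dvd_pow X hn).trans (Pr_prog 1 hα (show α ≤ c by omega) n)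
  have d2 := (pow_dvd_pow X hn).trans (Pr_prog 1 hβ (show β ≤ c by omega) n)
  have d3 := dvd_mul_sub d1 d2
  simp only [map_one, one_mul] at d3
  rw [finite_jtp hα hβ hc n] at d3
  have d4 := (dvd_mul_sub (a := Pr (-1) (Rs c c)) (b := Pr (-1) (Rs c c)) (by simp) d3)
  refine dvd_sub_symm (dvd_sub_trans d4 ?_)
  refine dvd_sub_trans (b := ∑ j ∈ Finset.range (2 * n + 1), X ^ (ee α β ((j : ℤ) - n))) ?_ ?_
  · rw [Finset.mul_sum, ← Finset.sum_sub_distrib]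
    refine Finset.dvd_sum fun j hj => ?_
    rw [Finset.mem_range] at hj
    have h1 := ee_ge hα hβ ((j : ℤ) - n)
    set μ := n - ((j : ℤ) - n).natAbs with hμ
    have h2 := gb_dvd (show 1 ≤ c by omega) (n := 2 * n) (j := j) (μ := μ) (by omega) (by omega)
    have h3 : Pr (-1) (Rs c c) * (gb (X ^ c) (2 * n) j * X ^ (ee α β ((j : ℤ) - n)))
        - X ^ (ee α β ((j : ℤ) - n)) = (Pr (-1) (Rs c c) * gb (X ^ c) (2 * n) j - 1)
          * X ^ (ee α β ((j : ℤ) - n)) := by ring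
    rw [h3]
    refine dvd_trans ?_ (mul_dvd_mul_right h2 _)
    rw [← pow_add]
    refine pow_dvd_pow X ?_
    have : μ ≤ c * μ := Nat.le_mul_of_pos_left _ (by omega)
    omega
  · rw [X_pow_dvd_iff]
    intro m hm
    rw [map_sub, map_sum, sub_eq_zero]
    simp only [coeff_X_pow, Th, coeff_mk]
    rw [Finset.sum_boole]
    congr 1
    rw [← Nat.card_eq_finsetCard]
    refine Nat.card_congr
      { toFun := fun x => ⟨(x.1 : ℤ) - n, (Finset.mem_filter.1 x.2).2.symm⟩
        invFun := fun k => ⟨(k.1 + n).toNat, ?_⟩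
        left_inv := ?_
        right_inv := ?_ }
    · have h1 := ee_ge hα hβ k.1
      have h2 := k.2
      rw [Finset.mem_filter, Finset.mem_range]
      refine ⟨by omega, ?_⟩
      rw [show (((k.1 + n).toNat : ℕ) : ℤ) - n = k.1 by omega, h2]
    · rintro ⟨x, hx⟩
      simp
    · rintro ⟨k, hk⟩
      have h1 := ee_ge hα hβ k
      simp only [Subtype.mk.injEq]
      omega

/-! ### Generating function for the partition count -/

lemma gen_b5 (n : ℕ) : coeff n (Pr 1 (fun k => ¬ 5 ∣ k)) = (b5' n : ℤ) := by
  classical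
  rw [Pr, coeff_mk, prf]
  have e1 : ∏ k ∈ Finset.range (n + 1), fac 1 (fun k => ¬ 5 ∣ k) k
      = ∏ k ∈ (Finset.range (n + 1)).filter (fun k => ¬ 5 ∣ k ∧ 0 < k), (1 + (X : ℤ⟦X⟧) ^ k) := by
    rw [Finset.prod_filter]
    refine Finset.prod_congr rfl fun k _ => ?_
    unfold fac
    simp
  rw [e1, Finset.prod_one_add, map_sum]
  have e2 : ∀ t : Finset ℕ, coeff n (∏ i ∈ t, (X : ℤ⟦X⟧) ^ i)
      = if (n = ∑ i ∈ t, i) then (1 : ℤ) else 0 := fun t => by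
    rw [Finset.prod_pow_eq_pow_sum t (fun i => i) (X : ℤ⟦X⟧), coeff_X_pow]
  rw [Finset.sum_congr rfl fun t _ => e2 t]
  rw [Finset.sum_boole, b5']
  congr 1
  symm
  refine Finset.card_bij (fun p _ => p.parts.toFinset) ?_ ?_ ?_
  · intro p hp
    simp only [Finset.mem_filter, Nat.Partition.distincts, Finset.mem_univ, true_and] at hp
    rw [Finset.mem_filter, Finset.mem_powerset]
    refine ⟨?_, ?_⟩
    · intro i hi
      rw [Multiset.mem_toFinset] at hi
      rw [Finset.mem_filter, Finset.mem_range]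
      exact ⟨Nat.lt_succ_of_le (Nat.Partition.le_of_mem_parts hi), hp.2 i hi, p.parts_pos hi⟩
    · have : ∑ i ∈ p.parts.toFinset, i = p.parts.sum := by
        rw [Finset.sum, Multiset.toFinset_val, Multiset.dedup_eq_self.2 hp.1, Multiset.map_id']
      rw [this, p.parts_sum]
  · intro p hp q hq h
    simp only [Finset.mem_filter, Nat.Partition.distincts, Finset.mem_univ, true_and] at hp hq
    ext1
    have := congrArg Finset.val h
    rwa [Multiset.toFinset_val, Multiset.toFinset_val, Multiset.dedup_eq_self.2 hp.1,
      Multiset.dedup_eq_self.2 hq.1] at this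
  · intro t ht
    rw [Finset.mem_filter, Finset.mem_powerset] at ht
    have hmem : ∀ i ∈ t, ¬ 5 ∣ i ∧ 0 < i := fun i hi => (Finset.mem_filter.1 (ht.1 hi)).2
    refine ⟨⟨t.val, fun {i} hi => (hmem i hi).2, ?_⟩, ?_, ?_⟩
    · rw [ht.2, Finset.sum, Multiset.map_id']
    · simp only [Finset.mem_filter, Nat.Partition.distincts, Finset.mem_univ, true_and]
      exact ⟨t.nodup, fun i hi => (hmem i hi).1⟩
    · simp

/-- the part supported on multiples of 5 -/
noncomputable def p5 (F : ℤ⟦X⟧) : ℤ⟦X⟧ :=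
  PowerSeries.mk fun n => if 5 ∣ n then coeff n F else 0

lemma p5_mul (F S : ℤ⟦X⟧) (h : Sd 5 S) : p5 (F * S) = p5 F * S := by
  ext n
  rw [p5, coeff_mk, coeff_mul, coeff_mul]
  split_ifs with hn
  · refine Finset.sum_congr rfl fun p hp => ?_
    rw [Finset.HasAntidiagonal.mem_antidiagonal] at hp
    rw [p5, coeff_mk]
    split_ifs with h1
    · rfl
    · rw [h p.2 (by omega)]; simp
  · symm
    refine Finset.sum_eq_zero fun p hp => ?_
    rw [Finset.HasAntidiagonal.mem_antidiagonal] at hp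
    rw [p5, coeff_mk]
    split_ifs with h1
    · rw [h p.2 (by omega)]; simp
    · simp

lemma p5_Th {ι κ : Type} {e : ι → ℕ} {f : κ → ℕ} (g : κ → ι) (hg : Function.Injective g)
    (h : ∀ k, e (g k) = f k) (hf : ∀ k, 5 ∣ f k) (hs : ∀ i, 5 ∣ e i → ∃ k, g k = i) :
    p5 (Th e) = Th f := by
  ext n
  simp only [p5, Th, coeff_mk]
  split_ifs with hn
  · congr 1
    symm
    refine Nat.card_congr (Equiv.ofBijective
      (fun x : {k // f k = n} => (⟨g x.1, by rw [h, x.2]⟩ : {i // e i = n})) ⟨?_, ?_⟩)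
    · rintro ⟨x, hx⟩ ⟨y, hy⟩ hxy
      simp only [Subtype.mk.injEq] at hxy ⊢
      exact hg hxy
    · rintro ⟨i, hi⟩
      obtain ⟨k, rfl⟩ := hs i (by rw [hi]; exact hn)
      exact ⟨⟨k, by rw [← h, hi]⟩, rfl⟩
  · have : IsEmpty {x // f x = n} := ⟨fun x => hn (x.2 ▸ hf x.1)⟩
    simp

lemma step_one : p5 (Pr 1 (fun k => ¬ 5 ∣ k)) * Pr (-1) (Rs 5 5) ^ 2 = Th (ee 10 15) ^ 2 := by
  have hG : Pr 1 (fun k => ¬ 5 ∣ k)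
      = (Pr 1 (Rs 1 5) * Pr 1 (Rs 4 5)) * (Pr 1 (Rs 2 5) * Pr 1 (Rs 3 5)) := by
    rw [← Pr_union (D := fun k => k % 5 = 1 ∨ k % 5 = 4) (A := Rs 1 5) (B := Rs 4 5),
      ← Pr_union (D := fun k => k % 5 = 2 ∨ k % 5 = 3) (A := Rs 2 5) (B := Rs 3 5)]
    · apply Pr_union <;> intro k _ <;> omega
    all_goals (intro k _; (try simp only [Rs]); try omega)
  have h1 := jtp (α := 1) (β := 4) (c := 5) (by norm_num) (by norm_num) (by norm_num)
  have h2 := jtp (α := 2) (β := 3) (c := 5) (by norm_num) (by norm_num) (by norm_num)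
  have hS : Sd 5 (Pr (-1) (Rs 5 5) ^ 2) := by
    have : Sd 5 (Pr (-1) (Rs 5 5)) := Sd_Pr fun k hk => by simp only [Rs] at hk; omega
    rw [pow_two]; exact this.mul this
  rw [← p5_mul _ _ hS, hG]
  have h3 : Pr 1 (Rs 1 5) * Pr 1 (Rs 4 5) * (Pr 1 (Rs 2 5) * Pr 1 (Rs 3 5)) * Pr (-1) (Rs 5 5) ^ 2
      = Th (ee 1 4) * Th (ee 2 3) := by rw [h1, h2]; ring
  rw [h3, Th_mul (ee_FF _ (by norm_num)) (ee_FF _ (by norm_num)), pow_two,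
    Th_mul (ee_FF _ (by norm_num)) (ee_FF _ (by norm_num))]
  refine p5_Th (fun p : ℤ × ℤ => (p.1 + 2 * p.2, 2 * p.1 - p.2)) ?_ ?_ ?_ ?_
  · rintro ⟨a, b⟩ ⟨a', b'⟩ h
    simp only [Prod.mk.injEq] at h ⊢
    omega
  · rintro ⟨s, t⟩
    have a1 := ee_spec 1 4 (s + 2 * t)
    have a2 := ee_spec 2 3 (2 * s - t)
    have a3 := ee_spec 10 15 s
    have a4 := ee_spec 10 15 t
    dsimp only
    zify
    refine mul_left_cancel₀ (two_ne_zero (α := ℤ)) ?_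
    push_cast at *
    linear_combination a1 + a2 - a3 - a4
  · rintro ⟨s, t⟩
    have a3 := ee_spec 10 15 s
    have a4 := ee_spec 10 15 t
    dsimp only
    push_cast at *
    generalize s * (s + 1) = z1 at *
    generalize s * (s - 1) = z2 at *
    generalize t * (t + 1) = z3 at *
    generalize t * (t - 1) = z4 at *
    omega
  · rintro ⟨a, b⟩ h
    have a1 := ee_spec 1 4 a
    have a2 := ee_spec 2 3 b
    dsimp only at h
    have h5 : (5 : ℤ) ∣ 3 * a + b := by
      have e : 3 * a + b = 5 * (a * a + b * b) - 2 * ((ee 1 4 a : ℤ) + ee 2 3 b) := by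
        push_cast at *
        linear_combination a1 + a2
      generalize a * a + b * b = z at *
      omega
    refine ⟨((a + 2 * b) / 5, (2 * a - b) / 5), ?_⟩
    simp only [Prod.mk.injEq]
    omega

lemma step_two : Th (ee 5 20) ^ 2 = Th (ee 10 40) * Th (ee 25 25)
    + 2 * Th (ee 50 150) * (X ^ 5 * Th (ee 35 15)) := by
  have f1 : ∀ α β, 1 ≤ α → FF (ee α β) := fun α β h => ee_FF β h
  have hX : (X : ℤ⟦X⟧) ^ 5 * Th (ee 35 15) = Th (fun p : Unit × ℤ => 5 + ee 35 15 p.2) := by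
    have : (X : ℤ⟦X⟧) ^ 5 = Th (fun _ : Unit => 5) := by
      ext n
      rw [coeff_X_pow, Th, coeff_mk]
      split_ifs with h
      · subst h; simp
      · have : IsEmpty {x : Unit // 5 = n} := ⟨fun x => h x.2.symm⟩
        simp
    rw [this, Th_mul _ (f1 _ _ (by norm_num))]
    intro n; infer_instance
  have hψ : Th (ee 50 0) = 2 * Th (ee 50 150) := by
    rw [two_mul, ← Th_sum (f1 _ _ (by norm_num)) (f1 _ _ (by norm_num))]
    symm
    refine Th_equiv (Equiv.ofBijective
      (Sum.elim (fun m : ℤ => -(2 * m)) (fun m : ℤ => 2 * m - 1)) ⟨?_, ?_⟩) ?_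
    · rintro (a | a) (b | b) h <;> simp at h ⊢ <;> omega
    · intro j
      rcases Int.even_or_odd' j with ⟨m, h | h⟩
      · exact ⟨Sum.inl (-m), by simp; omega⟩
      · exact ⟨Sum.inr (m + 1), by simp; omega⟩
    · rintro (a | a)
      · have a1 := ee_spec 50 0 (-(2 * a))
        have a2 := ee_spec 50 150 a
        change ee 50 0 (-(2 * a)) = ee 50 150 a
        zify
        push_cast at *
        linarith
      · have a1 := ee_spec 50 0 (2 * a - 1)
        have a2 := ee_spec 50 150 a
        change ee 50 0 (2 * a - 1) = ee 50 150 a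
        zify
        push_cast at *
        linarith
  rw [← hψ, hX, pow_two, Th_mul (f1 _ _ (by norm_num)) (f1 _ _ (by norm_num)),
    Th_mul (f1 _ _ (by norm_num)) (f1 _ _ (by norm_num)), Th_mul (f1 _ _ (by norm_num)),
    ← Th_sum]
  · symm
    refine Th_equiv (Equiv.ofBijective
      (Sum.elim (fun p : ℤ × ℤ => (p.1 + p.2, p.1 - p.2))
        (fun p : ℤ × (Unit × ℤ) => (p.2.2 + p.1 + 1, p.2.2 - p.1))) ⟨?_, ?_⟩) ?_
    · rintro (⟨a, b⟩ | ⟨a, u, b⟩) (⟨a', b'⟩ | ⟨a', u', b'⟩) h <;> simp at h ⊢ <;> omega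
    · rintro ⟨s, t⟩
      rcases Int.even_or_odd' (s + t) with ⟨m, h | h⟩
      · exact ⟨Sum.inl (m, s - m), by simp; omega⟩
      · exact ⟨Sum.inr (m - t, (), m), by simp; omega⟩
    · rintro (⟨a, b⟩ | ⟨b, u, a⟩)
      · have a1 := ee_spec 5 20 (a + b)
        have a2 := ee_spec 5 20 (a - b)
        have a3 := ee_spec 10 40 a
        have a4 := ee_spec 25 25 b
        change ee 5 20 (a + b) + ee 5 20 (a - b) = ee 10 40 a + ee 25 25 b
        zify
        push_cast at *
        linarith
      · have a1 := ee_spec 5 20 (a + b + 1)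
        have a2 := ee_spec 5 20 (a - b)
        have a3 := ee_spec 35 15 a
        have a4 := ee_spec 50 0 b
        change ee 5 20 (a + b + 1) + ee 5 20 (a - b) = ee 50 0 b + (5 + ee 35 15 a)
        zify
        push_cast at *
        linarith
  · exact FF_prod (f1 _ _ (by norm_num)) (f1 _ _ (by norm_num))
  · refine FF_prod (f1 _ _ (by norm_num)) (FF_prod (e := fun _ : Unit => 5) ?_ (f1 _ _ (by norm_num)))
    intro n; infer_instance
  · refine FF_prod (e := fun _ : Unit => 5) ?_ (f1 _ _ (by norm_num))
    intro n; infer_instance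

lemma phi_mod : ∃ w : ℤ⟦X⟧, Th (ee 25 25) = 1 + 2 * w := by
  have hF : FF (fun j : ℕ => ee 25 25 ((j : ℤ) + 1)) := by
    intro n
    have := ee_FF 25 (show 1 ≤ 25 by norm_num) n
    refine Finite.of_injective
      (fun x : {j : ℕ // ee 25 25 ((j : ℤ) + 1) = n} =>
        (⟨(x.1 : ℤ) + 1, x.2⟩ : {k // ee 25 25 k = n})) ?_
    rintro ⟨a, _⟩ ⟨b, _⟩ h
    simpa using h
  have hU : FF (fun _ : Unit => 0) := by intro n; infer_instance
  refine ⟨Th (fun j : ℕ => ee 25 25 ((j : ℤ) + 1)), ?_⟩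
  have h1 : (1 : ℤ⟦X⟧) = Th (fun _ : Unit => 0) := by
    ext n
    rw [coeff_one, Th, coeff_mk]
    split_ifs with h
    · subst h; simp
    · have : IsEmpty {x : Unit // 0 = n} := ⟨fun x => h x.2.symm⟩
      simp
  have hs : FF (Sum.elim (fun _ : Unit => 0) (fun j : ℕ => ee 25 25 ((j : ℤ) + 1))) := by
    intro n
    have := hU n
    have := hF n
    have e1 : {x : Unit ⊕ ℕ // Sum.elim (fun _ : Unit => 0)
      (fun j : ℕ => ee 25 25 ((j : ℤ) + 1)) x = n} ≃ {x : Unit // 0 = n} ⊕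
        {j : ℕ // ee 25 25 ((j : ℤ) + 1) = n} := Equiv.subtypeSum
    exact Finite.of_equiv _ e1.symm
  rw [h1, two_mul, ← add_assoc, ← Th_sum hU hF, ← Th_sum hs hF]
  symm
  refine Th_equiv (Equiv.ofBijective (Sum.elim (Sum.elim (fun _ : Unit => (0 : ℤ))
    (fun j : ℕ => (j : ℤ) + 1)) (fun j : ℕ => -((j : ℤ) + 1))) ⟨?_, ?_⟩) ?_
  · rintro ((a | a) | a) ((b | b) | b) h <;> simp at h ⊢ <;> omega
  · intro k
    rcases lt_trichotomy k 0 with h | h | h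
    · exact ⟨Sum.inr (-k - 1).toNat, by simp; omega⟩
    · exact ⟨Sum.inl (Sum.inl ()), by simp [h]⟩
    · exact ⟨Sum.inl (Sum.inr (k - 1).toNat), by simp; omega⟩
  · rintro ((a | a) | a)
    · simp [ee]
    · simp
    · have a1 := ee_spec 25 25 (-((a : ℤ) + 1))
      have a2 := ee_spec 25 25 ((a : ℤ) + 1)
      change ee 25 25 (-((a : ℤ) + 1)) = ee 25 25 ((a : ℤ) + 1)
      zify
      push_cast at *
      linarith

/-! ### Conclusion -/

/-- the class of series we are interested in -/
def W (H : ℤ⟦X⟧) : Prop :=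
  ∀ n, (n % 2 = 1 → 2 ∣ coeff n H) ∧ (n % 4 = 3 → 4 ∣ coeff n H)

lemma Sd_inv {d : ℕ} {F G : ℤ⟦X⟧} (hF : Sd d F) (h0 : coeff 0 F = 1) (h : F * G = 1) :
    Sd d G := by
  intro n
  induction n using Nat.strong_induction_on with
  | _ n ih =>
    intro hn
    have h1 := congrArg (coeff n) h
    have hn0 : n ≠ 0 := by rintro rfl; simp at hn
    rw [coeff_mul, coeff_one, if_neg hn0] at h1
    rw [Finset.sum_eq_single (0, n)] at h1
    · simpa [h0] using h1
    · rintro ⟨a, b⟩ hab hne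
      rw [Finset.HasAntidiagonal.mem_antidiagonal] at hab
      dsimp only at hab ⊢
      by_cases ha : d ∣ a
      · have hb : ¬ d ∣ b := fun hb => hn (hab ▸ dvd_add ha hb)
        have : a ≠ 0 := by
          rintro rfl
          exact hne (by simp; omega)
        rw [ih b (by omega) hb, mul_zero]
      · rw [hF a ha, zero_mul]
    · intro h; simp at h

lemma sq_coeff {F : ℤ⟦X⟧} (hF : Sd 2 F) {n : ℕ} (hn : n % 4 = 2) : 2 ∣ coeff n (F ^ 2) := by
  rw [pow_two, coeff_mul, Finset.Nat.sum_antidiagonal_eq_sum_range_succ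
    (fun a b => coeff a F * coeff b F)]
  obtain ⟨m, rfl⟩ : ∃ m, n = 2 * m + 1 + 1 := ⟨n / 2 - 1, by omega⟩
  rw [show (2 * m + 1 + 1).succ = (m + 1) + 1 + (m + 1) by omega, Finset.sum_range_add,
    Finset.sum_range_succ _ (m + 1)]
  have h0 : coeff (m + 1) F * coeff (2 * m + 1 + 1 - (m + 1)) F = 0 := by
    rw [hF (m + 1) (by omega), zero_mul]
  rw [h0, add_zero, ← Finset.sum_range_reflect, ← Finset.sum_add_distrib]
  refine Finset.dvd_sum fun i hi => ?_
  rw [Finset.mem_range] at hi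
  have e1 : m + 1 - 1 - i = m - i := by omega
  have e2 : 2 * m + 1 + 1 - (m - i) = m + 1 + 1 + i := by omega
  have e3 : 2 * m + 1 + 1 - (m + 1 + 1 + i) = m - i := by omega
  rw [e1, e2, e3]
  exact ⟨coeff (m - i) F * coeff (m + 1 + 1 + i) F, by ring⟩

lemma W_mul_sq {H F : ℤ⟦X⟧} (hH : W H) (hF : Sd 2 F) : W (H * F ^ 2) := by
  have hF2 : Sd 2 (F ^ 2) := by rw [pow_two]; exact hF.mul hF
  intro n
  rw [coeff_mul]
  constructor
  · intro hn
    refine Finset.dvd_sum fun p hp => ?_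
    rw [Finset.HasAntidiagonal.mem_antidiagonal] at hp
    by_cases h : p.2 % 2 = 1
    · rw [hF2 _ (by omega)]; simp
    · exact ((hH p.1).1 (by omega)).mul_right _
  · intro hn
    refine Finset.dvd_sum fun p hp => ?_
    rw [Finset.HasAntidiagonal.mem_antidiagonal] at hp
    by_cases h : p.2 % 2 = 1
    · rw [hF2 _ (by omega)]; simp
    · by_cases h4 : p.2 % 4 = 0
      · exact ((hH p.1).2 (by omega)).mul_right _
      · exact mul_dvd_mul ((hH p.1).1 (by omega)) (sq_coeff hF (by omega))

lemma final_W : W (p5 (Pr 1 (fun k => ¬ 5 ∣ k))) := by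
  have s1 := step_one
  have s2 := step_two
  obtain ⟨w, hφ⟩ := phi_mod
  set B := p5 (Pr 1 (fun k => ¬ 5 ∣ k))
  have j1 := jtp (α := 10) (β := 15) (c := 25) (by norm_num) (by norm_num) (by norm_num)
  have j2 := jtp (α := 5) (β := 20) (c := 25) (by norm_num) (by norm_num) (by norm_num)
  have j3 := jtp (α := 25) (β := 25) (c := 50) (by norm_num) (by norm_num) (by norm_num)
  have j4 := jtp (α := 50) (β := 150) (c := 200) (by norm_num) (by norm_num) (by norm_num)
  -- five-fold splitting
  have u1 : Pr (-1) (Rs 5 5) = Pr (-1) (Rs 25 25) * ((Pr (-1) (Rs 5 25) * Pr (-1) (Rs 20 25)) *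
      (Pr (-1) (Rs 10 25) * Pr (-1) (Rs 15 25))) := by
    rw [← Pr_union (D := fun k => k % 25 = 5 ∨ k % 25 = 20) (A := Rs 5 25) (B := Rs 20 25),
      ← Pr_union (D := fun k => k % 25 = 10 ∨ k % 25 = 15) (A := Rs 10 25) (B := Rs 15 25),
      ← Pr_union (D := fun k => k % 25 = 5 ∨ k % 25 = 20 ∨ k % 25 = 10 ∨ k % 25 = 15)]
    · apply Pr_union <;> intro k _ <;> simp only [Rs] <;> omega
    all_goals (intro k _; (try simp only [Rs]); try omega)
  have u2 : Pr (-1) (Rs 25 25) = Pr (-1) (Rs 25 50) * Pr (-1) (Rs 50 50) := by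
    apply Pr_union <;> intro k _ <;> simp only [Rs] <;> omega
  have u3 : Pr (-1) (Rs 50 50) = Pr (-1) (Rs 50 100) * Pr (-1) (Rs 100 100) := by
    apply Pr_union <;> intro k _ <;> simp only [Rs] <;> omega
  have u4 : Pr 1 (Rs 50 100) = Pr 1 (Rs 50 200) * Pr 1 (Rs 150 200) := by
    apply Pr_union <;> intro k _ <;> simp only [Rs] <;> omega
  have v1 : Pr 1 (Rs 5 25) * Pr (-1) (Rs 5 25) = Pr (-1) (Rs 10 50) := by
    apply Pr_double <;> intro k <;> simp only [Rs] <;> omega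
  have v2 : Pr 1 (Rs 20 25) * Pr (-1) (Rs 20 25) = Pr (-1) (Rs 40 50) := by
    apply Pr_double <;> intro k <;> simp only [Rs] <;> omega
  have v3 : Pr 1 (Rs 25 50) * Pr (-1) (Rs 25 50) = Pr (-1) (Rs 50 100) := by
    apply Pr_double <;> intro k <;> simp only [Rs] <;> omega
  have v4 : Pr 1 (Rs 50 100) * Pr (-1) (Rs 50 100) = Pr (-1) (Rs 100 200) := by
    apply Pr_double <;> intro k <;> simp only [Rs] <;> omega
  obtain ⟨x1, hx1⟩ := Pr_mod_two (Rs 10 25)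
  obtain ⟨x2, hx2⟩ := Pr_mod_two (Rs 15 25)
  have hC2 : (C 2 : ℤ⟦X⟧) = 2 := by simp
  rw [hC2] at hx1 hx2
  obtain ⟨V, hV⟩ := inv_of_one (coeff_zero_Pr (-1) (Rs 5 5))
  -- names
  set M5 := Pr (-1) (Rs 5 5) with hM5
  set m0 := Pr (-1) (Rs 25 25)
  set M50 := Pr (-1) (Rs 50 50) with hM50
  set g := Pr (-1) (Rs 10 50) * Pr (-1) (Rs 40 50) with hg
  set F := M50 ^ 2 * Pr (-1) (Rs 50 100) * g with hFdef
  have hF : Sd 2 F := by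
    have a1 : Sd 2 M50 := Sd_Pr fun k hk => by simp only [Rs] at hk; omega
    have a2 : Sd 2 (Pr (-1) (Rs 50 100)) := Sd_Pr fun k hk => by simp only [Rs] at hk; omega
    have a3 : Sd 2 (Pr (-1) (Rs 10 50)) := Sd_Pr fun k hk => by simp only [Rs] at hk; omega
    have a4 : Sd 2 (Pr (-1) (Rs 40 50)) := Sd_Pr fun k hk => by simp only [Rs] at hk; omega
    rw [hFdef, pow_two]
    exact ((a1.mul a1).mul a2).mul (a3.mul a4)
  have hF0 : coeff 0 F = 1 := by
    simp only [hFdef, hg, hM50, coeff_zero_eq_constantCoeff_apply, map_mul, map_pow]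
    simp only [← coeff_zero_eq_constantCoeff_apply, coeff_zero_Pr]
    norm_num
  -- congruence mod 4
  obtain ⟨y, hy⟩ : ∃ y, Th (ee 10 15) * m0 * g = Th (ee 5 20) * M5 + 2 * y := by
    refine ⟨m0 ^ 2 * g * (x1 * Pr 1 (Rs 15 25) + Pr (-1) (Rs 10 25) * x2), ?_⟩
    have h1 : Pr 1 (Rs 10 25) = Pr (-1) (Rs 10 25) + 2 * x1 := by linear_combination hx1
    have h2 : Pr 1 (Rs 15 25) = Pr (-1) (Rs 15 25) + 2 * x2 := by linear_combination hx2
    rw [j1, j2, u1, hg, ← v1, ← v2, h1, h2]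
    ring
  obtain ⟨z, hz⟩ : ∃ z, B * m0 ^ 2 * g ^ 2 = Th (ee 5 20) ^ 2 + 4 * z := by
    refine ⟨V ^ 2 * (Th (ee 5 20) * M5 * y + y ^ 2), ?_⟩
    have h1 : B * M5 ^ 2 * (m0 ^ 2 * g ^ 2) = (Th (ee 5 20) * M5 + 2 * y) ^ 2 := by
      rw [s1, ← hy]; ring
    have h2 : M5 ^ 2 * V ^ 2 = 1 := by rw [← mul_pow, hV, one_pow]
    linear_combination V ^ 2 * h1 + (Th (ee 5 20) ^ 2 - B * m0 ^ 2 * g ^ 2) * h2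
  have hψ : Th (ee 50 150) * M50 =
      Pr (-1) (Rs 200 200) * (Pr (-1) (Rs 100 200) * Pr (-1) (Rs 100 100)) := by
    rw [j4, ← v4, ← u4, u3]; ring
  have hBF : B * F ^ 2 = m0 ^ 2 * B * g ^ 2 * Th (ee 25 25) * M50 := by
    rw [hFdef, j3, u2, ← v3]; ring
  obtain ⟨z', hz'⟩ : ∃ z', B * F ^ 2 = (Th (ee 10 40) * M50
      + 2 * (Th (ee 50 150) * M50) * (X ^ 5 * Th (ee 35 15))) + 4 * z' := by
    refine ⟨z * Th (ee 25 25) * M50 + Th (ee 10 40) * (w + w ^ 2) * M50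
      + w * (Th (ee 50 150) * M50) * (X ^ 5 * Th (ee 35 15)), ?_⟩
    have h1 : B * F ^ 2 = (Th (ee 5 20) ^ 2 + 4 * z) * Th (ee 25 25) * M50 := by
      rw [hBF, ← hz]; ring
    rw [h1, s2, hφ]
    ring
  have hW : W (B * F ^ 2) := by
    have b1 : Sd 2 (Th (ee 10 40) * M50) := by
      refine Sd.mul (Sd_Th ?_) (Sd_Pr fun k hk => by simp only [Rs] at hk; omega)
      intro k
      have a1 := ee_spec 10 40 k
      have a2 := kk_even k
      have a3 := kk_even (k - 1)
      rw [sub_add_cancel, mul_comm] at a3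
      push_cast at a1
      generalize k * (k + 1) = z1 at *
      generalize k * (k - 1) = z2 at *
      omega
    have b2 : Sd 4 (Th (ee 50 150) * M50) := by
      rw [hψ]
      refine Sd.mul (Sd_Pr ?_) (Sd.mul (Sd_Pr ?_) (Sd_Pr ?_)) <;>
        (intro k hk; simp only [Rs] at hk; omega)
    have b3 : ∀ n, n % 4 = 3 → coeff n ((X : ℤ⟦X⟧) ^ 5 * Th (ee 35 15)) = 0 := by
      intro n hn
      rw [coeff_X_pow_mul']
      split_ifs with h5
      · rw [Th, coeff_mk]
        have : IsEmpty {k // ee 35 15 k = n - 5} := by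
          refine ⟨?_⟩
          rintro ⟨k, hk⟩
          have a1 := ee_spec 35 15 k
          rcases Int.even_or_odd' k with ⟨m, rfl | rfl⟩
          · have : (ee 35 15 (2 * m) : ℤ) = 4 * (25 * m * m + 5 * m) := by
              push_cast at a1; linarith
            generalize 25 * m * m + 5 * m = z1 at *
            omega
          · have : (ee 35 15 (2 * m + 1) : ℤ) = 4 * (25 * m * m + 30 * m + 8) + 3 := by
              push_cast at a1; linarith
            generalize 25 * m * m + 30 * m + 8 = z1 at *
            omega
        simp
      · rfl
    have b4 : ∀ n, n % 4 = 3 →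
        coeff n ((Th (ee 50 150) * M50) * ((X : ℤ⟦X⟧) ^ 5 * Th (ee 35 15))) = 0 := by
      intro n hn
      rw [coeff_mul]
      refine Finset.sum_eq_zero fun p hp => ?_
      rw [Finset.HasAntidiagonal.mem_antidiagonal] at hp
      by_cases h : 4 ∣ p.1
      · rw [b3 p.2 (by omega), mul_zero]
      · rw [b2 _ h, zero_mul]
    have hC4 : (4 : ℤ⟦X⟧) = C 4 := by simp
    intro n
    rw [hz', mul_assoc, ← hC2, hC4, map_add, map_add, coeff_C_mul, coeff_C_mul]
    constructor
    · intro hn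
      rw [b1 n (by omega)]
      omega
    · intro hn
      rw [b1 n (by omega), b4 n hn]
      omega
  obtain ⟨U, hU⟩ := inv_of_one hF0
  have := W_mul_sq hW (Sd_inv hF hF0 hU)
  have e : B * F ^ 2 * U ^ 2 = B := by
    rw [mul_assoc, ← mul_pow, hU]; ring
  rwa [e] at this

end B5aux

theorem b5'_20n15_mod4 (n : ℕ) : b5' (20 * n + 15) ≡ 0 [MOD 4] := by
  have h := (B5aux.final_W (20 * n + 15)).2 (by omega)
  rw [B5aux.p5, coeff_mk, if_pos (by omega), B5aux.gen_b5] at h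
  rw [Nat.modEq_zero_iff_dvd]
  exact_mod_cast h
end
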